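/- arXiv:1209.1237 — 3 statements merged into one kernel-verified Lean document; each statement's English description precedes it below -/
import Mathlib

section
/- Let k be an algebraically closed field of characteristic 0. Then the ring R_d of SL_2(k)-invariants in k[A_0,...,A_d] is finitely generated as a k-algebra. -/
noncomputable section

open MvPolynomial


/-- the generic binary form of degree d, with coefficients the variables A_0, ..., A_d -/
def genForm (k : Type*) [Field k] (d : ℕ) :
    MvPolynomial (Fin 2) (MvPolynomial (Fin (d + 1)) k) :=
  ∑ i : Fin (d + 1), C (X i) * X 0 ^ (i : ℕ) * X 1 ^ (d - (i : ℕ))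

/-- the generic binary form after the substitution (X,Y) ↦ (aX+bY, cX+dY) -/
def substGen (k : Type*) [Field k] (d : ℕ) (g : Matrix (Fin 2) (Fin 2) k) :
    MvPolynomial (Fin 2) (MvPolynomial (Fin (d + 1)) k) :=
  aeval (fun i : Fin 2 => C (C (g i 0)) * X 0 + C (C (g i 1)) * X 1) (genForm k d)

/-- the i-th coefficient of the transformed generic binary form, as a polynomial
in the coefficients A_0, ..., A_d -/
def actPoly (k : Type*) [Field k] (d : ℕ) (g : Matrix (Fin 2) (Fin 2) k) :
    Fin (d + 1) → MvPolynomial (Fin (d + 1)) k := fun i =>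
  coeff (Finsupp.single (0 : Fin 2) (i : ℕ) + Finsupp.single (1 : Fin 2) (d - (i : ℕ)))
    (substGen k d g)

/-- the action I ↦ I^g on the coordinate ring k[A_0,...,A_d], given by
(I^g)(f) = I(g(f)) -/
def actHom (k : Type*) [Field k] (d : ℕ) (g : Matrix (Fin 2) (Fin 2) k) :
    MvPolynomial (Fin (d + 1)) k →ₐ[k] MvPolynomial (Fin (d + 1)) k :=
  aeval (actPoly k d g)

/-- the ring R_d of SL_2(k)-invariants in k[A_0,...,A_d] -/
def invariantRing (k : Type*) [Field k] (d : ℕ) :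
    Subalgebra k (MvPolynomial (Fin (d + 1)) k) :=
  ⨅ g : Matrix.SpecialLinearGroup (Fin 2) k,
    AlgHom.equalizer (actHom k d (g : Matrix (Fin 2) (Fin 2) k)) (AlgHom.id k _)

/-- the nullcone N_d: the common zero set of all homogeneous invariants of positive degree -/
def nullcone (k : Type*) [Field k] (d : ℕ) : Set (Fin (d + 1) → k) :=
  {a | ∀ I ∈ invariantRing k d, ∀ n : ℕ, 0 < n → I.IsHomogeneous n → eval a I = 0}
section Helpers

variable {B : Type*} [CommRing B]

def ee (d i : ℕ) : Fin 2 →₀ ℕ :=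
  Finsupp.single (0 : Fin 2) i + Finsupp.single (1 : Fin 2) (d - i)

lemma ee_monomial (d i : ℕ) (c : B) :
    C c * X 0 ^ i * X 1 ^ (d - i) = monomial (ee d i) c := by
  rw [ee, C_mul_X_pow_eq_monomial, X_pow_eq_monomial, monomial_mul, mul_one]

lemma ee_inj (d : ℕ) {i j : ℕ} (h : ee d i = ee d j) : i = j := by
  have := DFunLike.congr_fun h 0
  simpa [ee] using this

lemma form_expand (d : ℕ) (p : MvPolynomial (Fin 2) B) (hp : p.IsHomogeneous d) :
    p = ∑ i : Fin (d + 1), C (coeff (ee d i) p) * X 0 ^ (i : ℕ) * X 1 ^ (d - (i : ℕ)) := by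
  simp only [ee_monomial]
  ext m
  rw [coeff_sum]
  simp only [coeff_monomial]
  by_cases hm : m.degree = d
  · have h2 : m 0 + m 1 = d := by
      rw [← hm, Finsupp.degree_eq_sum]; simp [Fin.sum_univ_two]
    have hme : ee d (m 0) = m := by
      ext j
      fin_cases j
      · simp [ee]
      · simp [ee]; omega
    rw [Finset.sum_eq_single (⟨m 0, by omega⟩ : Fin (d + 1))]
    · simp [hme]
    · intro b _ hb
      rw [if_neg]
      intro h
      apply hb
      ext
      exact ee_inj d (h.trans hme.symm)
    · simp
  · rw [hp.coeff_eq_zero hm]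
    symm
    apply Finset.sum_eq_zero
    intro i _
    rw [if_neg]
    rintro rfl
    apply hm
    have := i.2
    rw [Finsupp.degree_eq_sum]
    simp [Fin.sum_univ_two, ee]
    omega

/-- linear substitution -/
def lin (g : Matrix (Fin 2) (Fin 2) B) (i : Fin 2) : MvPolynomial (Fin 2) B :=
  C (g i 0) * X 0 + C (g i 1) * X 1

def mc (d : ℕ) (g : Matrix (Fin 2) (Fin 2) B) (i j : Fin (d + 1)) : B :=
  coeff (ee d i) (lin g 0 ^ (j : ℕ) * lin g 1 ^ (d - (j : ℕ)))

lemma mc_map {B' : Type*} [CommRing B'] (φ : B →+* B') (d : ℕ)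
    (g : Matrix (Fin 2) (Fin 2) B) (i j : Fin (d + 1)) :
    φ (mc d g i j) = mc d (g.map φ) i j := by
  simp [mc, ← coeff_map, lin]

lemma lin_hom (g : Matrix (Fin 2) (Fin 2) B) (i : Fin 2) : (lin g i).IsHomogeneous 1 := by
  unfold lin
  apply IsHomogeneous.add
  · simpa using (isHomogeneous_C (Fin 2) (g i 0)).mul (isHomogeneous_X B 0)
  · simpa using (isHomogeneous_C (Fin 2) (g i 1)).mul (isHomogeneous_X B 1)

lemma lin_comp (g h : Matrix (Fin 2) (Fin 2) B) (p : MvPolynomial (Fin 2) B) :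
    aeval (lin h) (aeval (lin g) p) = aeval (lin (g * h)) p := by
  suffices H : (aeval (lin h)).comp (aeval (lin g)) = aeval (R := B) (lin (g * h)) from
    DFunLike.congr_fun H p
  apply MvPolynomial.algHom_ext
  intro i
  simp [lin, Matrix.mul_apply, Fin.sum_univ_two, algHom_C]
  ring

variable {k : Type*} [Field k] (d : ℕ)

lemma substGen_eq (g : Matrix (Fin 2) (Fin 2) k) :
    substGen k d g = aeval (lin (g.map (C : k →+* MvPolynomial (Fin (d + 1)) k)))
      (genForm k d) := rfl

lemma actPoly_eq (g : Matrix (Fin 2) (Fin 2) k) (i : Fin (d + 1)) :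
    actPoly k d g i = ∑ j, X j * C (mc d g i j) := by
  unfold actPoly
  rw [substGen_eq, genForm, map_sum, coeff_sum]
  refine Finset.sum_congr rfl fun j _ => ?_
  rw [mc_map, mc, ← coeff_C_mul]
  simp [mul_assoc, ee, algHom_C]

lemma actPoly_hom (g : Matrix (Fin 2) (Fin 2) k) (i : Fin (d + 1)) :
    (actPoly k d g i).IsHomogeneous 1 := by
  rw [actPoly_eq]
  apply IsHomogeneous.sum
  intro j _
  simpa using (isHomogeneous_X k j).mul (isHomogeneous_C _ (mc d g i j))

lemma genForm_hom : (genForm k d).IsHomogeneous d := by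
  unfold genForm
  apply IsHomogeneous.sum
  intro j _
  rw [ee_monomial]
  apply isHomogeneous_monomial
  have := j.2
  rw [Finsupp.degree_eq_sum]
  simp [Fin.sum_univ_two, ee]
  omega

lemma substGen_expand (g : Matrix (Fin 2) (Fin 2) k) :
    substGen k d g =
      ∑ i : Fin (d + 1), C (actPoly k d g i) * X 0 ^ (i : ℕ) * X 1 ^ (d - (i : ℕ)) := by
  apply form_expand
  rw [substGen_eq]
  have := (genForm_hom (k := k) d).aeval _
    (lin_hom (g.map (C : k →+* MvPolynomial (Fin (d + 1)) k)))
  rw [one_mul] at this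
  exact this

lemma actHom_comp (g h : Matrix (Fin 2) (Fin 2) k) (p : MvPolynomial (Fin (d + 1)) k) :
    actHom k d g (actHom k d h p) = actHom k d (g * h) p := by
  suffices H : (actHom k d g).comp (actHom k d h) = actHom k d (g * h) from
    DFunLike.congr_fun H p
  apply MvPolynomial.algHom_ext
  intro i
  rw [AlgHom.comp_apply]
  have e1 : ∀ g, actHom k d g (X i) = actPoly k d g i := fun g => by simp [actHom]
  rw [e1, e1]
  unfold actPoly
  have : map (actHom k d g : _ →+* MvPolynomial (Fin (d + 1)) k) (substGen k d h)
      = substGen k d (g * h) := by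
    have h1 : map (actHom k d g : _ →+* MvPolynomial (Fin (d + 1)) k) (substGen k d h)
        = aeval (lin (h.map (C : k →+* MvPolynomial (Fin (d + 1)) k))) (substGen k d g) := by
      rw [substGen_expand d g, substGen_eq]
      simp only [genForm, map_sum]
      refine Finset.sum_congr rfl fun j _ => ?_
      simp [lin, actHom, algHom_C]
    rw [h1, substGen_eq, substGen_eq, lin_comp, Matrix.map_mul]
  rw [← this, coeff_map]
  rfl

lemma actHom_one (p : MvPolynomial (Fin (d + 1)) k) :
    actHom k d 1 p = p := by
  have : actHom k d 1 = AlgHom.id k _ := by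
    apply MvPolynomial.algHom_ext
    intro i
    have : substGen k d 1 = genForm k d := by
      rw [substGen_eq]
      have : lin ((1 : Matrix (Fin 2) (Fin 2) k).map (C : k →+* MvPolynomial (Fin (d + 1)) k))
        = X := by
        ext1 i
        fin_cases i <;> simp [lin]
      rw [this, aeval_X_left, AlgHom.id_apply]
    simp only [actHom, aeval_X, actPoly, this, genForm, AlgHom.id_apply, ee_monomial, coeff_sum]
    change ∑ x : Fin (d+1), coeff (ee d i) _ = _
    simp only [coeff_monomial]
    rw [Finset.sum_eq_single i]
    · simp
    · intro b _ hb
      rw [if_neg]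
      intro h
      exact hb (Fin.ext (ee_inj d h))
    · simp
  rw [this, AlgHom.id_apply]

lemma mc_smul (s : B) (g : Matrix (Fin 2) (Fin 2) B) (i j : Fin (d + 1)) :
    mc d (s • g) i j = s ^ d * mc d g i j := by
  have : ∀ a, lin (s • g) a = C s * lin g a := by
    intro a; simp [lin]; ring
  rw [mc, mc, this, this, mul_pow, mul_pow, ← coeff_C_mul]
  congr 1
  have hj : (j : ℕ) + (d - j) = d := by have := j.2; omega
  have hs : (C s : MvPolynomial (Fin 2) B) ^ d = C s ^ (j : ℕ) * C s ^ (d - (j : ℕ)) := by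
    rw [← pow_add, hj]
  rw [map_pow, hs]
  ring

lemma actHom_smul (s : k) (g : Matrix (Fin 2) (Fin 2) k) {n : ℕ}
    {p : MvPolynomial (Fin (d + 1)) k} (hp : p.IsHomogeneous n) :
    actHom k d (s • g) p = C (s ^ (d * n)) * actHom k d g p := by
  have : actPoly k d (s • g) = fun i => C (s ^ d) * actPoly k d g i := by
    ext1 i
    rw [actPoly_eq, actPoly_eq, Finset.mul_sum]
    refine Finset.sum_congr rfl fun j _ => ?_
    rw [mc_smul, C_mul]; ring
  rw [actHom, this, actHom, p.as_sum, map_sum, map_sum, Finset.mul_sum]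
  refine Finset.sum_congr rfl fun m hm => ?_
  have hm' : m.degree = n := by
    by_contra h
    exact (mem_support_iff.1 hm) (hp.coeff_eq_zero h)
  rw [aeval_monomial, aeval_monomial, Finsupp.prod, Finsupp.prod]
  simp only [mul_pow]
  rw [Finset.prod_mul_distrib, Finset.prod_pow_eq_pow_sum, pow_mul, ← hm', Finsupp.degree_apply]
  simp only [map_pow]
  ring

lemma actHom_hom (g : Matrix (Fin 2) (Fin 2) k) {n : ℕ}
    {p : MvPolynomial (Fin (d + 1)) k} (hp : p.IsHomogeneous n) :
    (actHom k d g p).IsHomogeneous n := by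
  have := hp.aeval _ (actPoly_hom d g)
  rw [one_mul] at this
  exact this

lemma actHom_comp_hom (g : Matrix (Fin 2) (Fin 2) k) (n : ℕ)
    (p : MvPolynomial (Fin (d + 1)) k) :
    homogeneousComponent n (actHom k d g p) = actHom k d g (homogeneousComponent n p) := by
  induction p using MvPolynomial.induction_on' with
  | monomial m c =>
    have h := isHomogeneous_monomial c (rfl : m.degree = m.degree)
    rw [homogeneousComponent_of_mem (actHom_hom d g h), homogeneousComponent_of_mem h]
    split_ifs <;> simp
  | add p q hp hq => simp only [map_add, hp, hq]

lemma mem_inv (p : MvPolynomial (Fin (d + 1)) k) : p ∈ invariantRing k d ↔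
    ∀ g : Matrix (Fin 2) (Fin 2) k, g.det = 1 → actHom k d g p = p := by
  simp only [invariantRing, Algebra.mem_iInf, AlgHom.mem_equalizer, AlgHom.id_apply]
  exact ⟨fun h g hg => h ⟨g, hg⟩, fun h g => h _ g.2⟩

lemma comp_mem_inv {p : MvPolynomial (Fin (d + 1)) k} (hp : p ∈ invariantRing k d) (n : ℕ) :
    homogeneousComponent n p ∈ invariantRing k d := by
  rw [mem_inv] at hp ⊢
  intro g hg
  rw [← actHom_comp_hom, hp g hg]

/-! ## generic action -/

variable (k) in
/-- S[a,b,c,d] -/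
abbrev TT := MvPolynomial (Fin 2 × Fin 2) (MvPolynomial (Fin (d + 1)) k)

def genMat : Matrix (Fin 2) (Fin 2) (TT k d) := Matrix.of fun a b => X (a, b)

def Phi : MvPolynomial (Fin (d + 1)) k →ₐ[k] TT k d :=
  aeval fun i => ∑ j, C (X j) * mc d (genMat d) i j

def evm (g : Matrix (Fin 2) (Fin 2) k) : TT k d →ₐ[MvPolynomial (Fin (d + 1)) k]
    MvPolynomial (Fin (d + 1)) k := aeval fun ab => C (g ab.1 ab.2)

lemma evm_Phi (g : Matrix (Fin 2) (Fin 2) k) (p : MvPolynomial (Fin (d + 1)) k) :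
    evm d g (Phi d p) = actHom k d g p := by
  have : ((evm d g).restrictScalars k).comp (Phi d) = actHom k d g := by
    apply MvPolynomial.algHom_ext
    intro i
    simp only [AlgHom.comp_apply, Phi, aeval_X, actHom, actPoly_eq, map_sum, map_mul]
    refine Finset.sum_congr rfl fun j _ => ?_
    congr 1
    · simp [evm]
    · rw [mc_map C]
      change (evm d g).toRingHom _ = _
      rw [mc_map]
      congr 1
      ext1 a b
      simp [genMat, evm]
  rw [← this]; rfl

lemma evm_ext [CharZero k] {p q : TT k d} (h : ∀ g, evm d g p = evm d g q) : p = q := by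
  apply MvPolynomial.funext_set (fun _ => Set.range (C : k →+* MvPolynomial (Fin (d + 1)) k))
  · intro _
    apply Set.infinite_range_of_injective (C_injective _ _)
  · intro x hx
    have hx' : ∀ ab, ∃ c : k, C c = x ab := fun ab => hx ab trivial
    choose f hf using hx'
    have := h (Matrix.of fun a b => f (a, b))
    simp only [evm, Matrix.of_apply, Prod.mk.eta, hf] at this
    simpa [aeval_eq_eval] using this

def tau (g : Matrix (Fin 2) (Fin 2) k) : TT k d →ₐ[MvPolynomial (Fin (d + 1)) k] TT k d :=
  aeval fun ab => ∑ l, C (C (g ab.1 l)) * X (l, ab.2)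

lemma evm_tau (g h : Matrix (Fin 2) (Fin 2) k) (p : TT k d) :
    evm d h (tau d g p) = evm d (g * h) p := by
  rw [← AlgHom.comp_apply]
  congr 1
  apply MvPolynomial.algHom_ext
  intro i
  simp [evm, tau, Matrix.mul_apply, algHom_C]

lemma evm_map (g h : Matrix (Fin 2) (Fin 2) k) (p : TT k d) :
    evm d h (map (actHom k d g : _ →+* MvPolynomial (Fin (d + 1)) k) p)
      = actHom k d g (evm d h p) := by
  induction p using MvPolynomial.induction_on with
  | C a => simp [evm, algHom_C]
  | add p q hp hq => simp only [map_add, hp, hq]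
  | mul_X p i hp =>
    simp only [map_mul, hp]
    simp [evm, algHom_C, actHom]

lemma map_Phi [CharZero k] (g : Matrix (Fin 2) (Fin 2) k) (p : MvPolynomial (Fin (d + 1)) k) :
    map (actHom k d g : _ →+* MvPolynomial (Fin (d + 1)) k) (Phi d p) = tau d g (Phi d p) := by
  apply evm_ext
  intro h
  rw [evm_map, evm_tau, evm_Phi, evm_Phi, actHom_comp]

variable (k) in
def dd : TT k d := X (0, 0) * X (1, 1) - X (0, 1) * X (1, 0)

lemma evm_dd (g : Matrix (Fin 2) (Fin 2) k) : evm d g (dd k d) = C g.det := by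
  simp [evm, dd, Matrix.det_fin_two]

lemma dd_ne : dd k d ≠ 0 := by
  intro h
  have := evm_dd d (1 : Matrix (Fin 2) (Fin 2) k)
  rw [h] at this
  simp at this

lemma tau_dd (g : Matrix (Fin 2) (Fin 2) k) : tau d g (dd k d) = C (C g.det) * dd k d := by
  simp [tau, dd, Matrix.det_fin_two, Fin.sum_univ_two]
  ring

lemma map_dd (g : Matrix (Fin 2) (Fin 2) k) :
    map (actHom k d g : _ →+* MvPolynomial (Fin (d + 1)) k) (dd k d) = dd k d := by
  simp [dd]

lemma Phi_inv [IsAlgClosed k] [CharZero k] {n : ℕ} {p : MvPolynomial (Fin (d + 1)) k}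
    (hp : p ∈ invariantRing k d)
    (hn : p.IsHomogeneous n) : ∃ w : ℕ, Phi d p = dd k d ^ w * C p := by
  rw [mem_inv] at hp
  by_cases hp0 : p = 0
  · exact ⟨0, by simp [hp0]⟩
  have heven : Even (d * n) := by
    by_contra hodd
    rw [Nat.not_even_iff_odd] at hodd
    have h1 := actHom_smul d (-1 : k) 1 hn
    rw [hp _ (by rw [Matrix.det_smul]; simp), actHom_one, hodd.neg_one_pow] at h1
    have h2 : (2 : MvPolynomial (Fin (d + 1)) k) * p = 0 := by
      simp at h1
      linear_combination h1
    simp [hp0] at h2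
  obtain ⟨w, hw⟩ := heven
  refine ⟨w, ?_⟩
  apply mul_left_cancel₀ (dd_ne d)
  apply evm_ext
  intro g
  simp only [map_mul, map_pow, evm_dd, evm_Phi]
  by_cases hg : g.det = 0
  · simp [hg]
  obtain ⟨s, hs⟩ := IsAlgClosed.exists_pow_nat_eq g.det (n := 2) (by norm_num)
  have hs0 : s ≠ 0 := by rintro rfl; apply hg; rw [← hs]; simp
  have hgs : g = s • (s⁻¹ • g) := by rw [smul_smul, mul_inv_cancel₀ hs0, one_smul]
  have : actHom k d g p = C (s ^ (d * n)) * p := by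
    rw [hgs, actHom_smul d _ _ hn, hp]
    rw [Matrix.det_smul, ← hs]
    simp [hs0]
  rw [this, hw, ← hs]
  have : evm d g (C p) = p := by simp [evm, algHom_C]
  rw [this]
  simp only [map_pow]
  ring

/-! ## Omega -/

def Om (p : TT k d) : TT k d :=
  pderiv (0, 0) (pderiv (1, 1) p) - pderiv (0, 1) (pderiv (1, 0) p)

lemma Om_add (p q : TT k d) : Om d (p + q) = Om d p + Om d q := by
  simp [Om]; ring

lemma Om_C_mul (c : MvPolynomial (Fin (d + 1)) k) (q : TT k d) :
    Om d (C c * q) = C c * Om d q := by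
  simp only [Om, pderiv_C_mul]; ring

lemma Om_map (g : Matrix (Fin 2) (Fin 2) k) (p : TT k d) :
    map (actHom k d g : _ →+* MvPolynomial (Fin (d + 1)) k) (Om d p) =
    Om d (map (actHom k d g : _ →+* MvPolynomial (Fin (d + 1)) k) p) := by
  simp only [Om, map_sub, pderiv_map]

lemma pd_comm {σ : Type*} (i j : σ) (p : MvPolynomial σ B) :
    pderiv i (pderiv j p) = pderiv j (pderiv i p) := by
  classical
  induction p using MvPolynomial.induction_on with
  | C a => simp
  | add p q hp hq => simp only [map_add, hp, hq]
  | mul_X p l hp =>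
    simp only [pderiv_mul, map_add, hp, pderiv_X, Pi.single_apply]
    split_ifs <;> simp <;> ring

lemma pd_tau (g : Matrix (Fin 2) (Fin 2) k) (i j : Fin 2) (p : TT k d) :
    pderiv (i, j) (tau d g p) =
      C (C (g 0 i)) * tau d g (pderiv (0, j) p) + C (C (g 1 i)) * tau d g (pderiv (1, j) p) := by
  induction p using MvPolynomial.induction_on with
  | C a => simp [tau, algHom_C]
  | add p q hp hq => simp only [map_add, hp, hq]; ring
  | mul_X p l hp =>
    simp only [map_mul, pderiv_mul, map_add, hp]
    have : pderiv (i, j) (tau d g (X l)) =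
      C (C (g 0 i)) * tau d g (pderiv (0, j) (X l)) +
      C (C (g 1 i)) * tau d g (pderiv (1, j) (X l)) := by
      obtain ⟨a, b⟩ := l
      simp only [tau, aeval_X, Fin.sum_univ_two, map_add, pderiv_C_mul, pderiv_X, Pi.single_apply]
      fin_cases i <;> fin_cases j <;> fin_cases a <;> fin_cases b <;> simp
    rw [this]
    ring

lemma Om_tau (g : Matrix (Fin 2) (Fin 2) k) (p : TT k d) :
    Om d (tau d g p) = C (C g.det) * tau d g (Om d p) := by
  simp only [Om, pd_tau, map_add, pderiv_C_mul, map_sub, Matrix.det_fin_two, map_mul]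
  rw [pd_comm (0, 1) (0, 0), pd_comm (0, 1) (1, 0), pd_comm (1, 1) (0, 0), pd_comm (1, 1) (1, 0)]
  ring

lemma Om_dd (v : ℕ) : Om d (dd k d ^ (v + 1)) = (((v + 1) * (v + 2) : ℕ) : TT k d) * dd k d ^ v := by
  have h00 : pderiv (0, 0) (dd k d) = X (1, 1) := by
    simp [dd, pderiv_mul, pderiv_X, Pi.single_apply]
  have h11 : pderiv (1, 1) (dd k d) = X (0, 0) := by
    simp [dd, pderiv_mul, pderiv_X, Pi.single_apply]
  have h01 : pderiv (0, 1) (dd k d) = - X (1, 0) := by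
    simp [dd, pderiv_mul, pderiv_X, Pi.single_apply]
  have h10 : pderiv (1, 0) (dd k d) = - X (0, 1) := by
    simp [dd, pderiv_mul, pderiv_X, Pi.single_apply]
  have e1 : pderiv (0, 0) (X (0, 0) : TT k d) = 1 := by simp
  have e2 : pderiv (0, 1) (X (0, 1) : TT k d) = 1 := by simp
  have hnat : ∀ i, pderiv i ((v + 1 : ℕ) : TT k d) = 0 := fun i => by simp
  have key : Om d (dd k d ^ (v + 1)) = ((v + 1 : ℕ) : TT k d) *
      ((v : ℕ) * (dd k d ^ (v - 1) * dd k d) + 2 * dd k d ^ v) := by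
    simp only [Om, pderiv_pow, pderiv_mul, h00, h11, h01, h10, hnat, map_neg, e1, e2,
      Nat.add_sub_cancel]
    rw [show dd k d ^ (v - 1) * dd k d = dd k d ^ (v - 1) * 
      (X (0, 0) * X (1, 1) - X (0, 1) * X (1, 0)) from rfl]
    ring
  rw [key]
  cases v with
  | zero => simp
  | succ v => simp only [Nat.add_sub_cancel, ← pow_succ]; push_cast; ring

def OmP (w : ℕ) (p : TT k d) : TT k d := (Om d)^[w] p

lemma OmP_succ (w : ℕ) (p : TT k d) : OmP d (w + 1) p = OmP d w (Om d p) := rfl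

lemma OmP_add (w : ℕ) (p q : TT k d) : OmP d w (p + q) = OmP d w p + OmP d w q := by
  induction w generalizing p q with
  | zero => rfl
  | succ w ih => simp only [OmP_succ, Om_add, ih]

lemma OmP_C_mul (w : ℕ) (c : MvPolynomial (Fin (d + 1)) k) (q : TT k d) :
    OmP d w (C c * q) = C c * OmP d w q := by
  induction w generalizing q with
  | zero => rfl
  | succ w ih => simp only [OmP_succ, Om_C_mul, ih]

lemma OmP_sum {ι : Type*} (w : ℕ) (s : Finset ι) (f : ι → TT k d) :
    OmP d w (∑ i ∈ s, f i) = ∑ i ∈ s, OmP d w (f i) :=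
  map_sum (⟨⟨OmP d w, by simpa using OmP_C_mul d w 0 0⟩, OmP_add d w⟩ : TT k d →+ TT k d) f s

lemma OmP_map (g : Matrix (Fin 2) (Fin 2) k) (w : ℕ) (p : TT k d) :
    map (actHom k d g : _ →+* MvPolynomial (Fin (d + 1)) k) (OmP d w p) =
    OmP d w (map (actHom k d g : _ →+* MvPolynomial (Fin (d + 1)) k) p) := by
  induction w generalizing p with
  | zero => rfl
  | succ w ih => simp only [OmP_succ, ih, Om_map]

lemma OmP_tau (g : Matrix (Fin 2) (Fin 2) k) (hg : g.det = 1) (w : ℕ) (p : TT k d) :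
    OmP d w (tau d g p) = tau d g (OmP d w p) := by
  induction w generalizing p with
  | zero => rfl
  | succ w ih => simp only [OmP_succ, Om_tau, ← ih, hg, map_one, one_mul]

lemma OmP_dd [CharZero k] (w : ℕ) : ∃ c : k, c ≠ 0 ∧ OmP d w (dd k d ^ w) = C (C c) := by
  induction w with
  | zero => exact ⟨1, one_ne_zero, by simp [OmP]⟩
  | succ w ih =>
    obtain ⟨c, hc, h⟩ := ih
    refine ⟨((w + 1) * (w + 2) : ℕ) * c, mul_ne_zero (by norm_cast) hc, ?_⟩
    rw [OmP_succ, Om_dd]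
    have : (((w + 1) * (w + 2) : ℕ) : TT k d) =
        C (((w + 1) * (w + 2) : ℕ) : MvPolynomial (Fin (d + 1)) k) := by
      rw [map_natCast]
    rw [this, OmP_C_mul, h, C_mul, C_mul, map_natCast C, map_natCast C, map_natCast C]

def rho (w v : ℕ) (h : MvPolynomial (Fin (d + 1)) k) : MvPolynomial (Fin (d + 1)) k :=
  evm d 0 (OmP d w (dd k d ^ v * Phi d h))

lemma rho_mem [CharZero k] (w v : ℕ) (h : MvPolynomial (Fin (d + 1)) k) :
    rho d w v h ∈ invariantRing k d := by
  rw [mem_inv]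
  intro g hg
  have e : map (actHom k d g : _ →+* MvPolynomial (Fin (d + 1)) k) (dd k d ^ v * Phi d h)
      = tau d g (dd k d ^ v * Phi d h) := by
    simp only [map_mul, map_pow, map_dd, map_Phi, tau_dd, hg, map_one, one_mul]
  rw [rho, ← evm_map, OmP_map, e, OmP_tau d g hg, evm_tau, mul_zero]

lemma key [IsAlgClosed k] [CharZero k] {n : ℕ} {p : MvPolynomial (Fin (d + 1)) k}
    (hp : p ∈ invariantRing k d) (hn : p.IsHomogeneous n)
    (s : Finset (MvPolynomial (Fin (d + 1)) k))
    (hs : ∀ f ∈ s, f ∈ invariantRing k d ∧ ∃ m, 0 < m ∧ f.IsHomogeneous m)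
    (h : p ∈ Ideal.span (s : Set (MvPolynomial (Fin (d + 1)) k))) :
    ∃ r : MvPolynomial (Fin (d + 1)) k → MvPolynomial (Fin (d + 1)) k,
      (∀ f ∈ s, r f ∈ invariantRing k d) ∧ p = ∑ f ∈ s, r f * f := by
  obtain ⟨a, -, ha⟩ := Submodule.mem_span_finset.1 h
  obtain ⟨w, hw⟩ := Phi_inv d hp hn
  obtain ⟨c, hc, hcw⟩ := OmP_dd (k := k) d w
  have hv : ∀ f, ∃ v, f ∈ s → Phi d f = dd k d ^ v * C f := by
    intro f
    by_cases hf : f ∈ s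
    · obtain ⟨h1, m, -, h2⟩ := hs f hf
      obtain ⟨v, hv⟩ := Phi_inv d h1 h2
      exact ⟨v, fun _ => hv⟩
    · exact ⟨0, fun h => absurd h hf⟩
  choose v hv using hv
  have e1 : C c * p = ∑ f ∈ s, rho d w (v f) (a f) * f := by
    have : evm d 0 (OmP d w (Phi d p)) = C c * p := by
      rw [hw, mul_comm, OmP_C_mul, hcw]
      simp [evm, algHom_C, mul_comm]
    rw [← this, ← ha, map_sum, OmP_sum, map_sum]
    refine Finset.sum_congr rfl fun f hf => ?_
    rw [smul_eq_mul, map_mul, hv f hf, rho]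
    rw [show Phi d (a f) * (dd k d ^ v f * C f) = C f * (dd k d ^ v f * Phi d (a f)) by ring,
      OmP_C_mul, map_mul, mul_comm]
    simp [evm, algHom_C]
  refine ⟨fun f => C c⁻¹ * rho d w (v f) (a f), fun f _ => ?_, ?_⟩
  · exact mul_mem ((invariantRing k d).algebraMap_mem c⁻¹) (rho_mem d _ _ _)
  · simp only [mul_assoc]
    rw [← Finset.mul_sum, ← e1, ← mul_assoc, ← C_mul, inv_mul_cancel₀ hc, C_1, one_mul]

lemma comp_mul_hom {σ : Type*} (n m : ℕ) (r f : MvPolynomial σ B) (hf : f.IsHomogeneous m) :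
    homogeneousComponent n (r * f) =
      if m ≤ n then homogeneousComponent (n - m) r * f else 0 := by
  induction r using MvPolynomial.induction_on' with
  | monomial u c =>
    have h := isHomogeneous_monomial c (rfl : u.degree = u.degree)
    rw [homogeneousComponent_of_mem (h.mul hf), homogeneousComponent_of_mem h]
    split_ifs <;> first | rfl | omega | simp
  | add p q hp hq =>
    simp only [add_mul, map_add, hp, hq]
    split_ifs <;> simp

end Helpers

/-- **Hilbert's finiteness theorem.** Over an algebraically closed field of characteristic 0,
the ring `R_d` of `SL₂(k)`-invariants in `k[A_0, ..., A_d]` is finitely generated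
as a `k`-algebra. -/
theorem invariantRing_fg (k : Type*) [Field k] [IsAlgClosed k] [CharZero k] (d : ℕ) :
    (invariantRing k d).FG := by
  let G : Set (MvPolynomial (Fin (d + 1)) k) :=
    {f | f ∈ invariantRing k d ∧ ∃ m, 0 < m ∧ f.IsHomogeneous m}
  have hfg : (Submodule.span (MvPolynomial (Fin (d + 1)) k) G).FG := IsNoetherian.noetherian _
  obtain ⟨s, hsG, hs⟩ := (Submodule.fg_span_iff_fg_span_finset_subset G).1 hfg
  refine ⟨s, le_antisymm (Algebra.adjoin_le fun f hf => (hsG hf).1) ?_⟩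
  have main : ∀ n (p : MvPolynomial (Fin (d + 1)) k), p ∈ invariantRing k d →
      p.IsHomogeneous n → p ∈ Algebra.adjoin k (s : Set (MvPolynomial (Fin (d + 1)) k)) := by
    intro n
    induction n using Nat.strong_induction_on with
    | _ n ih =>
      intro p hp hn
      rcases Nat.eq_zero_or_pos n with rfl | hpos
      · rw [← homogeneousComponent_eq_self hn, homogeneousComponent_zero]
        exact Subalgebra.algebraMap_mem _ _
      · have hpG : p ∈ Ideal.span (s : Set (MvPolynomial (Fin (d + 1)) k)) := by
          have : p ∈ Submodule.span (MvPolynomial (Fin (d + 1)) k) G :=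
            Submodule.subset_span ⟨hp, n, hpos, hn⟩
          rw [hs] at this
          exact this
        obtain ⟨r, hr, hpr⟩ := key d hp hn s (fun f hf => hsG hf) hpG
        rw [← homogeneousComponent_eq_self hn, hpr, map_sum]
        refine sum_mem fun f hf => ?_
        obtain ⟨-, m, hm, hfm⟩ := hsG hf
        rw [comp_mul_hom n m _ _ hfm]
        split_ifs with hmn
        · exact mul_mem (ih (n - m) (by omega) _ (comp_mem_inv d (hr f hf) _)
            (homogeneousComponent_isHomogeneous _ _)) (Algebra.subset_adjoin hf)
        · exact zero_mem _
  intro p hp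
  rw [← sum_homogeneousComponent p]
  exact sum_mem fun i _ => main i _ (comp_mem_inv d hp i) (homogeneousComponent_isHomogeneous _ _)
end
end

section
/- Let f be a binary octavic over a field k with char k ∉ {2,3,5,7}, let g = [[a,b],[c,d]] ∈ GL_2(k), set Δ = ad−bc, and let f′ = g(f) be the form obtained by substituting (X,Y) ↦ (aX+bY, cX+dY) in f. Then for every i ∈ {2,3,4,5,6,7,8,9,10}, J_i(f′) = Δ^{4i} · J_i(f). Moreover each J_i, viewed as a polynomial in the coefficients a_0,...,a_8 of f, is homogeneous of degree i with integer coefficients. -/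
noncomputable section

open MvPolynomial


variable {k : Type*} [Field k]

/-- char k not in {2,3,5,7} -/
def CharOK (k : Type*) [Field k] : Prop :=
  ringChar k ≠ 2 ∧ ringChar k ≠ 3 ∧ ringChar k ≠ 5 ∧ ringChar k ≠ 7

/-- the r-th transvectant of binary forms f, g of degrees n and m -/
def transvectant (n m r : ℕ) (f g : MvPolynomial (Fin 2) k) : MvPolynomial (Fin 2) k :=
  C ((((m - r).factorial * (n - r).factorial : ℕ) : k) /
      ((n.factorial * m.factorial : ℕ) : k)) *
    ∑ j ∈ Finset.range (r + 1),
      C ((-1 : k) ^ j * (r.choose j : k)) *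
        ((fun p => pderiv (0 : Fin 2) p)^[r - j] ((fun p => pderiv (1 : Fin 2) p)^[j] f)) *
        ((fun p => pderiv (0 : Fin 2) p)^[j] ((fun p => pderiv (1 : Fin 2) p)^[r - j] g))

/-- the binary octavic with coefficient vector a -/
def octForm (a : Fin 9 → k) : MvPolynomial (Fin 2) k :=
  ∑ i : Fin 9, C (a i) * X 0 ^ (i : ℕ) * X 1 ^ (8 - (i : ℕ))

def covg (a : Fin 9 → k) := transvectant 8 8 4 (octForm a) (octForm a)
def covk (a : Fin 9 → k) := transvectant 8 8 6 (octForm a) (octForm a)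
def covh (a : Fin 9 → k) := transvectant 4 4 2 (covk a) (covk a)
def covm (a : Fin 9 → k) := transvectant 8 4 4 (octForm a) (covk a)
def covn (a : Fin 9 → k) := transvectant 8 4 4 (octForm a) (covh a)
def covp (a : Fin 9 → k) := transvectant 8 4 4 (covg a) (covk a)
def covq (a : Fin 9 → k) := transvectant 8 4 4 (covg a) (covh a)

def J2 (a : Fin 9 → k) : k :=
  (2 ^ 2 * 5 * 7 : k) * constantCoeff (transvectant 8 8 8 (octForm a) (octForm a))
def J3 (a : Fin 9 → k) : k :=
  ((2 ^ 4 * 5 ^ 2 * 7 ^ 3 : k) / 3) * constantCoeff (transvectant 8 8 8 (octForm a) (covg a))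
def J4 (a : Fin 9 → k) : k :=
  (2 ^ 9 * 3 * 7 ^ 4 : k) * constantCoeff (transvectant 4 4 4 (covk a) (covk a))
def J5 (a : Fin 9 → k) : k :=
  (2 ^ 9 * 5 * 7 ^ 5 : k) * constantCoeff (transvectant 4 4 4 (covm a) (covk a))
def J6 (a : Fin 9 → k) : k :=
  (2 ^ 14 * 3 ^ 2 * 7 ^ 6 : k) * constantCoeff (transvectant 4 4 4 (covk a) (covh a))
def J7 (a : Fin 9 → k) : k :=
  (2 ^ 14 * 3 * 5 * 7 ^ 7 : k) * constantCoeff (transvectant 4 4 4 (covm a) (covh a))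
def J8 (a : Fin 9 → k) : k :=
  (2 ^ 17 * 3 * 5 ^ 2 * 7 ^ 9 : k) * constantCoeff (transvectant 4 4 4 (covp a) (covh a))
def J9 (a : Fin 9 → k) : k :=
  (2 ^ 19 * 3 ^ 2 * 5 * 7 ^ 9 : k) * constantCoeff (transvectant 4 4 4 (covn a) (covh a))
def J10 (a : Fin 9 → k) : k :=
  (2 ^ 22 * 3 ^ 2 * 5 ^ 2 * 7 ^ 11 : k) * constantCoeff (transvectant 4 4 4 (covq a) (covh a))

def Jinv : ℕ → (Fin 9 → k) → k
  | 2 => J2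
  | 3 => J3
  | 4 => J4
  | 5 => J5
  | 6 => J6
  | 7 => J7
  | 8 => J8
  | 9 => J9
  | 10 => J10
  | _ => fun _ => 0

/-- action of a 2x2 matrix on binary forms by substitution (X,Y) ↦ (aX+bY, cX+dY) -/
def substForm (g : Matrix (Fin 2) (Fin 2) k) (p : MvPolynomial (Fin 2) k) :
    MvPolynomial (Fin 2) k :=
  aeval (fun i : Fin 2 => C (g i 0) * X 0 + C (g i 1) * X 1) p

/-- coefficients of the transformed octavic -/
def octAct (g : Matrix (Fin 2) (Fin 2) k) (a : Fin 9 → k) : Fin 9 → k := fun i =>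
  coeff (Finsupp.single (0 : Fin 2) (i : ℕ) + Finsupp.single (1 : Fin 2) (8 - (i : ℕ)))
    (substForm g (octForm a))

namespace JT
open TensorProduct

abbrev A (k : Type*) [Field k] := MvPolynomial (Fin 2) k

def D (i : Fin 2) : Module.End k (A k) := (pderiv i).toLinearMap

lemma iter_D (i : Fin 2) (s : ℕ) (f : A k) :
    (fun p => pderiv i p)^[s] f = ((D i : Module.End k (A k)) ^ s) f := by
  rw [Module.End.pow_apply]; rfl

lemma D_comm : Commute (D 0 : Module.End k (A k)) (D 1) := by
  have : ∀ p : A k, pderiv 0 (pderiv 1 p) = pderiv 1 (pderiv 0 p) := by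
    intro p
    have := Derivation.congr_fun (D1 := ⁅pderiv (R := k) (0 : Fin 2), pderiv (R := k) (1 : Fin 2)⁆) (D2 := 0)
      (by ext i; fin_cases i <;> simp [Derivation.commutator_apply]) p
    simpa [Derivation.commutator_apply, sub_eq_zero] using this
  exact LinearMap.ext this

/-- the unnormalised transvectant -/
def Om (r : ℕ) (f g : A k) : A k :=
  ∑ j ∈ Finset.range (r + 1),
      C ((-1 : k) ^ j * (r.choose j : k)) *
        ((D 0 ^ (r - j)) ((D 1 ^ j) f)) * ((D 0 ^ j) ((D 1 ^ (r - j)) g))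

lemma transvectant_eq (n m r : ℕ) (f g : A k) :
    transvectant n m r f g =
    C ((((m - r).factorial * (n - r).factorial : ℕ) : k) /
      ((n.factorial * m.factorial : ℕ) : k)) * Om r f g := by
  simp only [transvectant, Om, iter_D]

def UU : Module.End k (A k ⊗[k] A k) := TensorProduct.map (D 1) (D 0)
def VV : Module.End k (A k ⊗[k] A k) := TensorProduct.map (D 0) (D 1)

def Omega : Module.End k (A k ⊗[k] A k) :=
  (-1 : k) • UU + VV

lemma UU_pow (j : ℕ) : (UU : Module.End k (A k ⊗[k] A k)) ^ j =
    TensorProduct.map (D 1 ^ j) (D 0 ^ j) := by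
  unfold UU; exact TensorProduct.map_pow _ _ _
lemma VV_pow (j : ℕ) : (VV : Module.End k (A k ⊗[k] A k)) ^ j =
    TensorProduct.map (D 0 ^ j) (D 1 ^ j) := by
  unfold VV; exact TensorProduct.map_pow _ _ _

lemma Om_eq (r : ℕ) (f g : A k) :
    Om r f g = LinearMap.mul' k (A k) ((Omega ^ r) (f ⊗ₜ g)) := by
  have hc0 : Commute (UU : Module.End k (A k ⊗[k] A k)) VV := by
    change TensorProduct.map (D 1) (D 0) * TensorProduct.map (D 0) (D 1) =
      TensorProduct.map (D 0) (D 1) * TensorProduct.map (D 1) (D 0)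
    rw [← TensorProduct.map_mul, ← TensorProduct.map_mul, D_comm.eq]
  have hc := hc0.smul_left (-1 : k)
  rw [Omega, hc.add_pow, LinearMap.sum_apply, map_sum, Om]
  refine Finset.sum_congr rfl fun j hj => ?_
  rw [smul_pow, UU_pow, VV_pow]
  simp only [LinearMap.smul_apply, smul_mul_assoc, Module.End.natCast_apply, TensorProduct.map_tmul, map_smul,
    map_nsmul, LinearMap.mul'_apply, Module.End.mul_apply]
  have e1 : (D 0 ^ (r - j)) ((D 1 ^ j) f) = (D 1 ^ j) ((D 0 ^ (r - j)) f) :=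
    LinearMap.congr_fun (D_comm.pow_pow (r - j) j).eq f
  rw [e1, ← Nat.cast_smul_eq_nsmul k, smul_smul, MvPolynomial.smul_eq_C_mul, mul_assoc]

def sg (g : Matrix (Fin 2) (Fin 2) k) : A k →ₐ[k] A k :=
  aeval (fun i : Fin 2 => C (g i 0) * X 0 + C (g i 1) * X 1)

lemma D_sg (g : Matrix (Fin 2) (Fin 2) k) (i : Fin 2) (p : A k) :
    D i (sg g p) = g 0 i • sg g (D 0 p) + g 1 i • sg g (D 1 p) := by
  change pderiv i (sg g p) = g 0 i • sg g (pderiv 0 p) + g 1 i • sg g (pderiv 1 p)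
  induction p using MvPolynomial.induction_on with
  | C a => simp [sg]
  | add p q hp hq => simp only [map_add, hp, hq, smul_add]; abel
  | mul_X p l hp =>
    rw [map_mul, Derivation.leibniz, hp]
    simp only [Derivation.leibniz, map_add, smul_eq_mul, map_mul, smul_add]
    fin_cases i <;> fin_cases l <;> simp [sg, MvPolynomial.smul_eq_C_mul, pderiv_X] <;> ring

lemma Omega_sg (g : Matrix (Fin 2) (Fin 2) k) :
    (Omega : Module.End k (A k ⊗[k] A k)) ∘ₗ TensorProduct.map (sg g).toLinearMap (sg g).toLinearMap
     = g.det • (TensorProduct.map (sg g).toLinearMap (sg g).toLinearMap ∘ₗ Omega) := by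
  apply TensorProduct.ext'
  intro p q
  simp only [LinearMap.comp_apply, LinearMap.smul_apply, TensorProduct.map_tmul, Omega, UU, VV,
    LinearMap.add_apply, AlgHom.toLinearMap_apply, D_sg, map_add, map_smul, Matrix.det_fin_two,
    TensorProduct.add_tmul, TensorProduct.tmul_add, TensorProduct.smul_tmul_smul]
  module

lemma Omega_pow_sg (g : Matrix (Fin 2) (Fin 2) k) (r : ℕ) (x : A k ⊗[k] A k) :
    (Omega ^ r) (TensorProduct.map (sg g).toLinearMap (sg g).toLinearMap x)
     = g.det ^ r • (TensorProduct.map (sg g).toLinearMap (sg g).toLinearMap ((Omega ^ r) x)) := by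
  induction r generalizing x with
  | zero => simp
  | succ r ih =>
    have := LinearMap.congr_fun (Omega_sg g) x
    simp only [LinearMap.comp_apply, LinearMap.smul_apply] at this
    rw [pow_succ, Module.End.mul_apply, this, map_smul, ih, smul_smul, Module.End.mul_apply, pow_succ']

lemma Om_sg (g : Matrix (Fin 2) (Fin 2) k) (r : ℕ) (p q : A k) :
    Om r (sg g p) (sg g q) = g.det ^ r • sg g (Om r p q) := by
  have h : ∀ x : A k ⊗[k] A k, LinearMap.mul' k (A k)
      (TensorProduct.map (sg g).toLinearMap (sg g).toLinearMap x) =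
      sg g (LinearMap.mul' k (A k) x) := by
    intro x
    induction x with
    | zero => simp
    | tmul a b => simp
    | add a b ha hb => simp only [map_add, ha, hb]
  rw [Om_eq, Om_eq, ← h, ← map_smul, ← Omega_pow_sg]
  simp

lemma Om_smul (r : ℕ) (s t : k) (p q : A k) :
    Om r (s • p) (t • q) = (s * t) • Om r p q := by
  rw [Om_eq, Om_eq, TensorProduct.smul_tmul_smul, map_smul, map_smul]

lemma tv_sg (g : Matrix (Fin 2) (Fin 2) k) (n m r e e' : ℕ) (p q p' q' : A k)
    (hp : p' = g.det ^ e • sg g p) (hq : q' = g.det ^ e' • sg g q) :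
    transvectant n m r p' q' = g.det ^ (e + e' + r) • sg g (transvectant n m r p q) := by
  subst hp hq
  rw [transvectant_eq, transvectant_eq, Om_smul, Om_sg, map_mul]
  simp only [MvPolynomial.smul_eq_C_mul, pow_add, map_mul]
  have : ∀ c : k, sg g (C c) = C c := fun c => by simp [sg]
  rw [this]; ring

lemma cc_sg (g : Matrix (Fin 2) (Fin 2) k) (p : A k) (e : ℕ) :
    constantCoeff (g.det ^ e • sg g p) = g.det ^ e * constantCoeff p := by
  have : constantCoeff (sg g p) = constantCoeff p := by
    induction p using MvPolynomial.induction_on with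
    | C a => simp [sg]
    | add p q hp hq => simp only [map_add, hp, hq]
    | mul_X p l hp => simp [sg]
  rw [MvPolynomial.smul_eq_C_mul, map_mul, this, constantCoeff_C]

lemma oct_hom (a : Fin 9 → k) : (octForm a).IsHomogeneous 8 := by
  apply IsHomogeneous.sum
  intro i _
  have := ((isHomogeneous_C (Fin 2) (a i)).mul (isHomogeneous_X_pow (R := k) (0 : Fin 2) (i:ℕ))).mul
    (isHomogeneous_X_pow (R := k) (1 : Fin 2) (8 - (i : ℕ)))
  convert this using 1
  omega

lemma sg_hom (g : Matrix (Fin 2) (Fin 2) k) (p : A k) (n : ℕ) (hp : p.IsHomogeneous n) :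
    (sg g p).IsHomogeneous n := by
  have h := hp.aeval (fun i : Fin 2 => (C (g i 0) * X 0 + C (g i 1) * X 1 : A k)) (n := 1)
    (fun i => by
      apply IsHomogeneous.add
      · simpa using (isHomogeneous_C (Fin 2) (g i 0)).mul (isHomogeneous_X k (0 : Fin 2))
      · simpa using (isHomogeneous_C (Fin 2) (g i 1)).mul (isHomogeneous_X k (1 : Fin 2)))
  rw [one_mul] at h
  exact h

lemma oct_of_hom (p : A k) (hp : p.IsHomogeneous 8) :
    octForm (fun i => coeff (Finsupp.single (0 : Fin 2) (i : ℕ) +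
      Finsupp.single (1 : Fin 2) (8 - (i : ℕ))) p) = p := by
  have hm : ∀ (c : k) (i j : ℕ), C c * X (0 : Fin 2) ^ i * X (1 : Fin 2) ^ j =
      monomial (Finsupp.single (0 : Fin 2) i + Finsupp.single (1 : Fin 2) j) c := by
    intro c i j
    rw [X_pow_eq_monomial, X_pow_eq_monomial, C_mul_monomial, monomial_mul]; simp
  ext d
  simp only [octForm, hm, coeff_sum, coeff_monomial]
  by_cases hd : d 0 + d 1 = 8
  · rw [Finset.sum_eq_single (⟨d 0, by omega⟩ : Fin 9)]
    · have : Finsupp.single (0 : Fin 2) (d 0) + Finsupp.single (1 : Fin 2) (8 - d 0) = d := by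
        ext i; fin_cases i <;> simp; omega
      simp only [this, if_true]
    · intro b _ hb
      rw [if_neg]
      rintro rfl
      apply hb; ext; simp
    · simp
  · rw [hp.coeff_eq_zero (d := d), Finset.sum_eq_zero]
    · intro b _
      rw [if_neg]
      rintro rfl
      apply hd
      simp; omega
    · rw [Finsupp.degree_eq_sum]; simpa using hd

lemma oct_act (g : Matrix (Fin 2) (Fin 2) k) (a : Fin 9 → k) :
    octForm (octAct g a) = g.det ^ 0 • sg g (octForm a) := by
  rw [pow_zero, one_smul]
  exact oct_of_hom _ (sg_hom g _ 8 (oct_hom a))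

lemma Jinv_act (g : Matrix (Fin 2) (Fin 2) k) (a : Fin 9 → k) (i : ℕ) (h2 : 2 ≤ i) (h10 : i ≤ 10) :
    Jinv i (octAct g a) = g.det ^ (4 * i) * Jinv i a := by
  have hf := oct_act g a
  have hG : covg (octAct g a) = g.det ^ _ • sg g (covg a) := tv_sg g 8 8 4 _ _ _ _ _ _ hf hf
  have hK : covk (octAct g a) = g.det ^ _ • sg g (covk a) := tv_sg g 8 8 6 _ _ _ _ _ _ hf hf
  have hH : covh (octAct g a) = g.det ^ _ • sg g (covh a) := tv_sg g 4 4 2 _ _ _ _ _ _ hK hK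
  have hM : covm (octAct g a) = g.det ^ _ • sg g (covm a) := tv_sg g 8 4 4 _ _ _ _ _ _ hf hK
  have hN : covn (octAct g a) = g.det ^ _ • sg g (covn a) := tv_sg g 8 4 4 _ _ _ _ _ _ hf hH
  have hP : covp (octAct g a) = g.det ^ _ • sg g (covp a) := tv_sg g 8 4 4 _ _ _ _ _ _ hG hK
  have hQ : covq (octAct g a) = g.det ^ _ • sg g (covq a) := tv_sg g 8 4 4 _ _ _ _ _ _ hG hH
  interval_cases i
  · simp only [Jinv, J2, tv_sg g 8 8 8 _ _ _ _ _ _ hf hf, cc_sg]; ring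
  · simp only [Jinv, J3, tv_sg g 8 8 8 _ _ _ _ _ _ hf hG, cc_sg]; ring
  · simp only [Jinv, J4, tv_sg g 4 4 4 _ _ _ _ _ _ hK hK, cc_sg]; ring
  · simp only [Jinv, J5, tv_sg g 4 4 4 _ _ _ _ _ _ hM hK, cc_sg]; ring
  · simp only [Jinv, J6, tv_sg g 4 4 4 _ _ _ _ _ _ hK hH, cc_sg]; ring
  · simp only [Jinv, J7, tv_sg g 4 4 4 _ _ _ _ _ _ hM hH, cc_sg]; ring
  · simp only [Jinv, J8, tv_sg g 4 4 4 _ _ _ _ _ _ hP hH, cc_sg]; ring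
  · simp only [Jinv, J9, tv_sg g 4 4 4 _ _ _ _ _ _ hN hH, cc_sg]; ring
  · simp only [Jinv, J10, tv_sg g 4 4 4 _ _ _ _ _ _ hQ hH, cc_sg]; ring

/-- binary form with coefficient sequence `u` -/
def form (n : ℕ) (u : ℕ → k) : A k :=
  ∑ i ∈ Finset.range (n + 1), C (u i) * X 0 ^ i * X 1 ^ (n - i)

def tcz (r i p j q : ℕ) : ℤ :=
  ∑ t ∈ Finset.range (r + 1), (-1) ^ t * (r.choose t : ℤ) *
    ((i.descFactorial (r - t) * p.descFactorial t : ℕ) : ℤ) *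
    ((j.descFactorial t * q.descFactorial (r - t) : ℕ) : ℤ)

lemma D0_pow (s i p : ℕ) (c : k) :
    (D 0 ^ s) (C c * X 0 ^ i * X 1 ^ p : A k) =
      C ((i.descFactorial s : k) * c) * X 0 ^ (i - s) * X 1 ^ p := by
  induction s with
  | zero => simp
  | succ s ih =>
    rw [pow_succ', Module.End.mul_apply, ih]
    change pderiv 0 _ = _
    simp only [Derivation.leibniz, Derivation.leibniz_pow, pderiv_C, pderiv_X_self,
      pderiv_X_of_ne (show (1 : Fin 2) ≠ 0 by decide), Nat.descFactorial_succ, smul_eq_mul,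
      nsmul_eq_mul, smul_zero, mul_zero, zero_add, add_zero, mul_one]
    rw [show i - (s + 1) = i - s - 1 by omega]
    push_cast
    simp only [map_mul, map_natCast]
    ring

lemma D1_pow (s i p : ℕ) (c : k) :
    (D 1 ^ s) (C c * X 0 ^ i * X 1 ^ p : A k) =
      C ((p.descFactorial s : k) * c) * X 0 ^ i * X 1 ^ (p - s) := by
  induction s with
  | zero => simp
  | succ s ih =>
    rw [pow_succ', Module.End.mul_apply, ih]
    change pderiv 1 _ = _
    simp only [Derivation.leibniz, Derivation.leibniz_pow, pderiv_C, pderiv_X_self,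
      pderiv_X_of_ne (show (0 : Fin 2) ≠ 1 by decide), Nat.descFactorial_succ, smul_eq_mul,
      nsmul_eq_mul, smul_zero, mul_zero, zero_add, add_zero, mul_one]
    rw [show p - (s + 1) = p - s - 1 by omega]
    push_cast
    simp only [map_mul, map_natCast]
    ring

lemma tcz_zero (r i p j q : ℕ) (h : i + j < r ∨ p + q < r) : tcz r i p j q = 0 := by
  apply Finset.sum_eq_zero
  intro t ht
  rw [Finset.mem_range] at ht
  rcases h with h | h
  · rcases (show i < r - t ∨ j < t by omega) with h | h <;>
      simp [Nat.descFactorial_eq_zero_iff_lt.2 h]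
  · rcases (show p < t ∨ q < r - t by omega) with h | h <;>
      simp [Nat.descFactorial_eq_zero_iff_lt.2 h]

lemma Om_mon (r i p j q : ℕ) (c c' : k) :
    Om r (C c * X 0 ^ i * X 1 ^ p) (C c' * X 0 ^ j * X 1 ^ q) =
      C ((tcz r i p j q : k) * (c * c')) * X 0 ^ (i + j - r) * X 1 ^ (p + q - r) := by
  simp only [Om, D0_pow, D1_pow, tcz]
  push_cast
  rw [Finset.sum_mul, map_sum, Finset.sum_mul, Finset.sum_mul]
  refine Finset.sum_congr rfl fun t ht => ?_
  rw [Finset.mem_range] at ht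
  by_cases h : r - t ≤ i ∧ t ≤ j ∧ t ≤ p ∧ r - t ≤ q
  · obtain ⟨h1, h2, h3, h4⟩ := h
    rw [show i + j - r = (i - (r - t)) + (j - t) by omega,
      show p + q - r = (p - t) + (q - (r - t)) by omega]
    simp only [map_mul, map_natCast, pow_add]
    ring
  · have : i < r - t ∨ j < t ∨ p < t ∨ q < r - t := by omega
    rcases this with h | h | h | h <;> simp [Nat.descFactorial_eq_zero_iff_lt.2 h]

lemma Om_sum (r : ℕ) (s t : Finset ℕ) (f g : ℕ → A k) :
    Om r (∑ i ∈ s, f i) (∑ j ∈ t, g j) = ∑ i ∈ s, ∑ j ∈ t, Om r (f i) (g j) := by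
  simp only [Om_eq, TensorProduct.sum_tmul, TensorProduct.tmul_sum, map_sum]
  rw [Finset.sum_comm]

def tz (n m r l i j : ℕ) : ℤ := if i + j = l + r then tcz r i (n - i) j (m - j) else 0

def bilk (a : ℕ → ℕ → ℤ) (n m : ℕ) (u v : ℕ → k) : k :=
  ∑ i ∈ Finset.range (n + 1), ∑ j ∈ Finset.range (m + 1), (a i j : k) * (u i * v j)

def FF (n m r : ℕ) : ℕ := (m - r).factorial * (n - r).factorial
def EE (n m : ℕ) : ℕ := n.factorial * m.factorial

def tvc (n m r : ℕ) (u v : ℕ → k) (l : ℕ) : k :=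
  (FF n m r : k) / (EE n m : k) * bilk (tz n m r l) n m u v

lemma tv_form (n m r d : ℕ) (hd : n + m = d + 2 * r) (u v : ℕ → k) :
    transvectant n m r (form n u) (form m v) = form d (tvc n m r u v) := by
  rw [transvectant_eq, form, form, Om_sum, form]
  simp only [tvc, bilk, Finset.mul_sum, map_sum, Finset.sum_mul]
  rw [Finset.sum_comm (s := Finset.range (d + 1))]
  refine Finset.sum_congr rfl fun i hi => ?_
  rw [Finset.sum_comm (s := Finset.range (d + 1))]
  refine Finset.sum_congr rfl fun j hj => ?_
  rw [Finset.mem_range] at hi hj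
  rw [Om_mon]
  by_cases h : i + j < r ∨ (n - i) + (m - j) < r
  · simp only [tz, tcz_zero _ _ _ _ _ h]
    simp
  · rw [Finset.sum_eq_single (i + j - r)]
    · rw [tz, if_pos (by omega), show d - (i + j - r) = (n - i) + (m - j) - r by omega]
      simp only [FF, EE, map_mul]
      ring
    · intro b _ hb
      rw [tz, if_neg (by omega)]
      simp
    · intro hn
      rw [Finset.mem_range] at hn
      omega

def cf (b : Fin 9 → k) (i : ℕ) : k := if h : i < 9 then b ⟨i, h⟩ else 0

lemma oct_form (b : Fin 9 → k) : octForm b = form 8 (cf b) := by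
  rw [octForm, form, Finset.sum_range]
  refine Finset.sum_congr rfl fun i _ => ?_
  rw [cf, dif_pos i.2]

lemma cc_form (w : ℕ → k) : constantCoeff (form 0 w) = w 0 := by
  simp [form]

/-! integral homogeneous functions -/

def IH (d : ℕ) (φ : (Fin 9 → k) → k) : Prop :=
  ∃ P : MvPolynomial (Fin 9) ℤ, P.IsHomogeneous d ∧
    ∀ b : Fin 9 → k, φ b = eval₂ (Int.castRingHom k) b P

lemma IH.mul {d e : ℕ} {φ ψ : (Fin 9 → k) → k} (h : IH d φ) (h' : IH e ψ) :
    IH (d + e) (fun b => φ b * ψ b) := by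
  obtain ⟨P, hP, h⟩ := h
  obtain ⟨Q, hQ, h'⟩ := h'
  exact ⟨P * Q, hP.mul hQ, fun b => by beta_reduce; rw [eval₂_mul, h, h']⟩

lemma IH.zmul {d : ℕ} {φ : (Fin 9 → k) → k} (h : IH d φ) (z : ℤ) :
    IH d (fun b => (z : k) * φ b) := by
  obtain ⟨P, hP, h⟩ := h
  exact ⟨C z * P, by simpa using (isHomogeneous_C (Fin 9) z).mul hP,
    fun b => by beta_reduce; rw [eval₂_mul, eval₂_C, h]; simp⟩

lemma IH.sum {d : ℕ} (s : Finset ℕ) {φ : ℕ → (Fin 9 → k) → k} (h : ∀ i ∈ s, IH d (φ i)) :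
    IH d (fun b => ∑ i ∈ s, φ i b) := by
  choose! P hP h using h
  exact ⟨∑ i ∈ s, P i, IsHomogeneous.sum _ _ _ hP,
    fun b => by rw [eval₂_sum]; exact Finset.sum_congr rfl fun i hi => h i hi b⟩

def Sc (d n : ℕ) (N D : ℕ → ℤ) (w : (Fin 9 → k) → ℕ → k) : Prop :=
  ∀ l < n + 1, ∃ φ : (Fin 9 → k) → k, IH d φ ∧ ∀ b, (D l : k) * w b l = (N l : k) * φ b

def NZ (k : Type*) [Field k] (n : ℕ) (D : ℕ → ℤ) : Prop := ∀ i < n + 1, (D i : k) ≠ 0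

lemma nz_of_dvd (hk : CharOK k) (z : ℤ) (hz : z ∣ 210 ^ 40) : (z : k) ≠ 0 := by
  have key : ∀ p : ℕ, p.Prime → ringChar k ≠ p → (p : k) ≠ 0 := by
    intro p hp hne h0
    have := (ringChar.spec k p).1 h0
    rcases (Nat.dvd_prime hp).1 this with h | h
    · exact CharP.ringChar_ne_one h
    · exact hne h
  obtain ⟨w, hw⟩ := hz
  intro h0
  have h1 := congrArg (Int.cast : ℤ → k) hw
  rw [Int.cast_pow, Int.cast_mul, h0, zero_mul, Int.cast_ofNat] at h1
  have h2 : (210 : k) = 0 := by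
    by_contra h
    exact pow_ne_zero 40 h h1
  have h3 : ((2 : ℕ) : k) * ((3 : ℕ) : k) * ((5 : ℕ) : k) * ((7 : ℕ) : k) = 0 := by
    rw [← h2]; norm_num
  simp only [mul_eq_zero] at h3
  obtain ⟨c2, c3, c5, c7⟩ := hk
  rcases h3 with ((h | h) | h) | h
  · exact key 2 (by norm_num) c2 h
  · exact key 3 (by norm_num) c3 h
  · exact key 5 (by norm_num) c5 h
  · exact key 7 (by norm_num) c7 h

lemma scal {E p q a N c : ℤ} {x y : k} (hE : (E : k) ≠ 0) (hp : (p : k) ≠ 0)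
    (hxy : (p : k) * x = q * y) (h : a * q = E * p * N * c) :
    (a : k) / E * x = N * (c * y) := by
  have h' : (a : k) * q = E * p * N * c := by exact_mod_cast congrArg (Int.cast : ℤ → k) h
  rw [div_mul_eq_mul_div, div_eq_iff hE]
  apply mul_left_cancel₀ hp
  linear_combination (a : k) * hxy + y * h'

lemma core2 {d e n m : ℕ} {Nu Du Nv Dv : ℕ → ℤ} {u v : (Fin 9 → k) → ℕ → k}
    (hu : Sc d n Nu Du u) (hv : Sc e m Nv Dv v) (hDu : NZ k n Du) (hDv : NZ k m Dv)
    (E B N : ℤ) (hE : (E : k) ≠ 0) (a : ℕ → ℕ → ℤ)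
    (hdiv : ∀ i < n + 1, ∀ j < m + 1, E * (Du i * Dv j) * N ∣ B * a i j * (Nu i * Nv j)) :
    ∃ φ : (Fin 9 → k) → k, IH (d + e) φ ∧
      ∀ b, (B : k) / E * bilk a n m (u b) (v b) = N * φ b := by
  choose! U hU1 hU2 using hu
  choose! V hV1 hV2 using hv
  choose! c hc using hdiv
  refine ⟨fun b => ∑ i ∈ Finset.range (n + 1), ∑ j ∈ Finset.range (m + 1),
    (c i j : k) * (U i b * V j b), ?_, ?_⟩
  · refine IH.sum _ fun i hi => IH.sum _ fun j hj => IH.zmul (IH.mul (hU1 i ?_) (hV1 j ?_)) _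
    · simpa using hi
    · simpa using hj
  · intro b
    simp only [bilk, Finset.mul_sum]
    refine Finset.sum_congr rfl fun i hi => Finset.sum_congr rfl fun j hj => ?_
    rw [Finset.mem_range] at hi hj
    rw [← scal (x := u b i * v b j) hE (p := Du i * Dv j) (q := Nu i * Nv j) (a := B * a i j)
      (by push_cast; exact mul_ne_zero (hDu i hi) (hDv j hj))
      (by push_cast; linear_combination (Dv j * v b j : k) * hU2 i hi b +
            (Nu i * U i b : k) * hV2 j hj b) (hc i hi j hj)]
    push_cast; ring

def trik (a : ℕ → ℕ → ℕ → ℤ) (n m s : ℕ) (u v w : ℕ → k) : k :=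
  ∑ i ∈ Finset.range (n + 1), ∑ j ∈ Finset.range (m + 1), ∑ l ∈ Finset.range (s + 1),
    (a i j l : k) * (u i * v j * w l)

lemma core3 {d e f n m s : ℕ} {Nu Du Nv Dv Nw Dw : ℕ → ℤ} {u v w : (Fin 9 → k) → ℕ → k}
    (hu : Sc d n Nu Du u) (hv : Sc e m Nv Dv v) (hw : Sc f s Nw Dw w)
    (hDu : NZ k n Du) (hDv : NZ k m Dv) (hDw : NZ k s Dw)
    (E B N : ℤ) (hE : (E : k) ≠ 0) (a : ℕ → ℕ → ℕ → ℤ)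
    (hdiv : ∀ i < n + 1, ∀ j < m + 1, ∀ l < s + 1,
      E * (Du i * Dv j * Dw l) * N ∣ B * a i j l * (Nu i * Nv j * Nw l)) :
    ∃ φ : (Fin 9 → k) → k, IH (d + e + f) φ ∧
      ∀ b, (B : k) / E * trik a n m s (u b) (v b) (w b) = N * φ b := by
  choose! U hU1 hU2 using hu
  choose! V hV1 hV2 using hv
  choose! W hW1 hW2 using hw
  choose! c hc using hdiv
  refine ⟨fun b => ∑ i ∈ Finset.range (n + 1), ∑ j ∈ Finset.range (m + 1),
    ∑ l ∈ Finset.range (s + 1), (c i j l : k) * (U i b * V j b * W l b), ?_, ?_⟩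
  · refine IH.sum _ fun i hi => IH.sum _ fun j hj => IH.sum _ fun l hl =>
      IH.zmul (IH.mul (IH.mul (hU1 i ?_) (hV1 j ?_)) (hW1 l ?_)) _
    · simpa using hi
    · simpa using hj
    · simpa using hl
  · intro b
    simp only [trik, Finset.mul_sum]
    refine Finset.sum_congr rfl fun i hi => Finset.sum_congr rfl fun j hj =>
      Finset.sum_congr rfl fun l hl => ?_
    rw [Finset.mem_range] at hi hj hl
    rw [← scal (x := u b i * v b j * w b l) hE (p := Du i * Dv j * Dw l)
      (q := Nu i * Nv j * Nw l) (a := B * a i j l)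
      (by push_cast; exact mul_ne_zero (mul_ne_zero (hDu i hi) (hDv j hj)) (hDw l hl))
      (by push_cast; linear_combination (Dv j * v b j * Dw l * w b l : k) * hU2 i hi b +
            (Nu i * U i b * Dw l * w b l : k) * hV2 j hj b +
            (Nu i * U i b * Nv j * V j b : k) * hW2 l hl b) (hc i hi j hj l hl)]
    push_cast; ring

/-! folding -/

def fold (a : ℕ → ℕ → ℤ) (i j : ℕ) : ℤ :=
  if i < j then a i j + a j i else if i = j then a i j else 0

lemma fold_sum (s : Finset ℕ) (a : ℕ → ℕ → ℤ) (x : ℕ → ℕ → k) (hx : ∀ i j, x i j = x j i) :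
    ∑ i ∈ s, ∑ j ∈ s, (a i j : k) * x i j = ∑ i ∈ s, ∑ j ∈ s, (fold a i j : k) * x i j := by
  have h1 : ∀ i j, (fold a i j : k) * x i j =
      (if i ≤ j then (a i j : k) * x i j else 0) + (if i < j then (a j i : k) * x j i else 0) := by
    intro i j
    rw [fold, hx j i]
    rcases lt_trichotomy i j with h | h | h
    · simp only [h, h.le, if_true]; push_cast; ring
    · subst h; simp
    · simp [h.ne', h.not_gt, h.not_ge]
  simp only [h1, Finset.sum_add_distrib]
  rw [Finset.sum_comm (f := fun i j => if i < j then (a j i : k) * x j i else 0),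
    ← Finset.sum_add_distrib]
  refine Finset.sum_congr rfl fun i _ => ?_
  rw [← Finset.sum_add_distrib]
  refine Finset.sum_congr rfl fun j _ => ?_
  rcases le_or_gt i j with h | h
  · simp [h, h.not_gt]
  · simp [h, h.not_ge]

lemma bil_fold (a : ℕ → ℕ → ℤ) (n : ℕ) (u : ℕ → k) : bilk a n n u u = bilk (fold a) n n u u :=
  fold_sum _ a _ fun i j => mul_comm _ _

lemma tri_fold23 (a : ℕ → ℕ → ℕ → ℤ) (n m : ℕ) (u v : ℕ → k) :
    trik a n m m u v v = trik (fun i => fold (a i)) n m m u v v :=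
  Finset.sum_congr rfl fun i _ => fold_sum _ (a i) _ fun _ _ => by ring

lemma tri_fold12 (a : ℕ → ℕ → ℕ → ℤ) (n m : ℕ) (u v : ℕ → k) :
    trik a n n m u u v = trik (fun i j l => fold (fun i j => a i j l) i j) n n m u u v := by
  have h : ∀ a : ℕ → ℕ → ℕ → ℤ, trik a n n m u u v = ∑ l ∈ Finset.range (m + 1),
      ∑ i ∈ Finset.range (n + 1), ∑ j ∈ Finset.range (n + 1), (a i j l : k) * (u i * u j * v l) := by
    intro a
    rw [trik, Finset.sum_congr rfl (fun i _ => Finset.sum_comm), Finset.sum_comm]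
  rw [h, h]
  exact Finset.sum_congr rfl fun l _ =>
    fold_sum _ (fun i j => a i j l) (fun i j => u i * u j * v l) fun _ _ => by ring

def fold3 (a : ℕ → ℕ → ℕ → ℤ) (i : ℕ) : ℕ → ℕ → ℤ :=
  fold fun j l => fold (fun i j => fold (a i) j l) i j

lemma tri_fold3 (a : ℕ → ℕ → ℕ → ℤ) (n : ℕ) (u : ℕ → k) :
    trik a n n n u u u = trik (fold3 a) n n n u u u := by
  rw [tri_fold23, tri_fold12, tri_fold23]; rfl

/-! compositions -/

def compL (n m r d m' r' l : ℕ) (i j s : ℕ) : ℤ :=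
  ∑ t ∈ Finset.range (d + 1), tz d m' r' l t s * tz n m r t i j

def compR (n m r d n' r' l : ℕ) (i j s : ℕ) : ℤ :=
  ∑ t ∈ Finset.range (d + 1), tz n' d r' l i t * tz n m r t j s

lemma tvc_L (n m r d m' r' l : ℕ) (u v w : ℕ → k) :
    tvc d m' r' (tvc n m r u v) w l =
      ((FF d m' r' * FF n m r : ℕ) : k) / ((EE d m' * EE n m : ℕ) : k) *
        trik (compL n m r d m' r' l) n m m' u v w := by
  simp only [tvc, bilk, trik, compL]
  push_cast
  rw [mul_div_mul_comm, mul_assoc]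
  congr 1
  simp only [Finset.mul_sum, Finset.sum_mul]
  rw [Finset.sum_comm]
  simp_rw [Finset.sum_comm (s := Finset.range (d + 1))]
  rw [Finset.sum_comm]
  refine Finset.sum_congr rfl fun i _ => ?_
  rw [Finset.sum_comm]
  refine Finset.sum_congr rfl fun j _ => ?_
  refine Finset.sum_congr rfl fun s _ => ?_
  refine Finset.sum_congr rfl fun t _ => ?_
  ring

lemma tvc_R (n m r d n' r' l : ℕ) (u v w : ℕ → k) :
    tvc n' d r' u (tvc n m r v w) l =
      ((FF n' d r' * FF n m r : ℕ) : k) / ((EE n' d * EE n m : ℕ) : k) *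
        trik (compR n m r d n' r' l) n' n m u v w := by
  simp only [tvc, bilk, trik, compR]
  push_cast
  rw [mul_div_mul_comm, mul_assoc]
  congr 1
  simp only [Finset.mul_sum, Finset.sum_mul]
  refine Finset.sum_congr rfl fun i _ => ?_
  simp_rw [Finset.sum_comm (s := Finset.range (d + 1))]
  refine Finset.sum_congr rfl fun j _ => ?_
  refine Finset.sum_congr rfl fun s _ => ?_
  refine Finset.sum_congr rfl fun t _ => ?_
  ring

lemma Sc_bil {d e n m : ℕ} (L r : ℕ) {Nu Du Nv Dv : ℕ → ℤ} (N D : ℕ → ℤ)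
    {u v : (Fin 9 → k) → ℕ → k}
    (hu : Sc d n Nu Du u) (hv : Sc e m Nv Dv v) (hDu : NZ k n Du) (hDv : NZ k m Dv)
    (hE : (((EE n m : ℕ) : ℤ) : k) ≠ 0)
    (hdiv : ∀ l < L + 1, ∀ i < n + 1, ∀ j < m + 1,
      (EE n m : ℤ) * (Du i * Dv j) * N l ∣ (D l * FF n m r) * tz n m r l i j * (Nu i * Nv j)) :
    Sc (d + e) L N D (fun b => tvc n m r (u b) (v b)) := by
  intro l hl
  obtain ⟨φ, h1, h2⟩ := core2 hu hv hDu hDv _ _ _ hE _ (hdiv l hl)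
  refine ⟨φ, h1, fun b => ?_⟩
  beta_reduce
  rw [← h2, tvc]; push_cast; ring

lemma Sc_sq {d n : ℕ} (L r : ℕ) {Nu Du : ℕ → ℤ} (N D : ℕ → ℤ)
    {u : (Fin 9 → k) → ℕ → k}
    (hu : Sc d n Nu Du u) (hDu : NZ k n Du)
    (hE : (((EE n n : ℕ) : ℤ) : k) ≠ 0)
    (hdiv : ∀ l < L + 1, ∀ i < n + 1, ∀ j < n + 1,
      (EE n n : ℤ) * (Du i * Du j) * N l ∣
        (D l * FF n n r) * fold (tz n n r l) i j * (Nu i * Nu j)) :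
    Sc (d + d) L N D (fun b => tvc n n r (u b) (u b)) := by
  intro l hl
  obtain ⟨φ, h1, h2⟩ := core2 hu hu hDu hDu _ _ _ hE _ (hdiv l hl)
  refine ⟨φ, h1, fun b => ?_⟩
  beta_reduce
  rw [← h2, tvc, bil_fold]; push_cast; ring

lemma Sc_cube {d n : ℕ} (L r d' r' : ℕ) {Nu Du : ℕ → ℤ} (N D : ℕ → ℤ)
    {u : (Fin 9 → k) → ℕ → k}
    (hu : Sc d n Nu Du u) (hDu : NZ k n Du)
    (hE : (((EE n d' * EE n n : ℕ) : ℤ) : k) ≠ 0)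
    (hdiv : ∀ l < L + 1, ∀ i < n + 1, ∀ j < n + 1, ∀ s < n + 1,
      ((EE n d' * EE n n : ℕ) : ℤ) * (Du i * Du j * Du s) * N l ∣
        (D l * (FF n d' r' * FF n n r : ℕ)) * fold3 (compR n n r d' n r' l) i j s *
          (Nu i * Nu j * Nu s)) :
    Sc (d + d + d) L N D (fun b => tvc n d' r' (u b) (tvc n n r (u b) (u b))) := by
  intro l hl
  obtain ⟨φ, h1, h2⟩ := core3 hu hu hu hDu hDu hDu _ _ _ hE _ (hdiv l hl)
  refine ⟨φ, h1, fun b => ?_⟩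
  beta_reduce
  rw [← h2, tvc_R, tri_fold3]; push_cast; ring

lemma Sc_L {d e f n m m' : ℕ} (L r d' r' : ℕ) {Nu Du Nv Dv Nw Dw : ℕ → ℤ} (N D : ℕ → ℤ)
    {u v w : (Fin 9 → k) → ℕ → k}
    (hu : Sc d n Nu Du u) (hv : Sc e m Nv Dv v) (hw : Sc f m' Nw Dw w)
    (hDu : NZ k n Du) (hDv : NZ k m Dv) (hDw : NZ k m' Dw)
    (hE : (((EE d' m' * EE n m : ℕ) : ℤ) : k) ≠ 0)
    (hdiv : ∀ l < L + 1, ∀ i < n + 1, ∀ j < m + 1, ∀ s < m' + 1,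
      ((EE d' m' * EE n m : ℕ) : ℤ) * (Du i * Dv j * Dw s) * N l ∣
        (D l * (FF d' m' r' * FF n m r : ℕ)) * compL n m r d' m' r' l i j s *
          (Nu i * Nv j * Nw s)) :
    Sc (d + e + f) L N D (fun b => tvc d' m' r' (tvc n m r (u b) (v b)) (w b)) := by
  intro l hl
  obtain ⟨φ, h1, h2⟩ := core3 hu hv hw hDu hDv hDw _ _ _ hE _ (hdiv l hl)
  refine ⟨φ, h1, fun b => ?_⟩
  beta_reduce
  rw [← h2, tvc_L]; push_cast; ring

lemma Sc_Ls {d e n m : ℕ} (L r d' r' : ℕ) {Nu Du Nv Dv : ℕ → ℤ} (N D : ℕ → ℤ)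
    {u v : (Fin 9 → k) → ℕ → k}
    (hu : Sc d n Nu Du u) (hv : Sc e m Nv Dv v)
    (hDu : NZ k n Du) (hDv : NZ k m Dv)
    (hE : (((EE d' m * EE n m : ℕ) : ℤ) : k) ≠ 0)
    (hdiv : ∀ l < L + 1, ∀ i < n + 1, ∀ j < m + 1, ∀ s < m + 1,
      ((EE d' m * EE n m : ℕ) : ℤ) * (Du i * Dv j * Dv s) * N l ∣
        (D l * (FF d' m r' * FF n m r : ℕ)) * fold (compL n m r d' m r' l i) j s *
          (Nu i * Nv j * Nv s)) :
    Sc (d + e + e) L N D (fun b => tvc d' m r' (tvc n m r (u b) (v b)) (v b)) := by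
  intro l hl
  obtain ⟨φ, h1, h2⟩ := core3 hu hv hv hDu hDv hDv _ _ _ hE _ (hdiv l hl)
  refine ⟨φ, h1, fun b => ?_⟩
  beta_reduce
  rw [← h2, tvc_L, tri_fold23]; push_cast; ring

def o1 : ℕ → ℤ := fun _ => 1
def dG (l : ℕ) : ℤ := [1960, 490, 980, 490, 1960, 490, 980, 490, 1960].getD l 1
def dK (l : ℕ) : ℤ := [784, 392, 784, 392, 784].getD l 1
def dH (l : ℕ) : ℤ := [3687936, 1843968, 3687936, 1843968, 3687936].getD l 1
def dM (l : ℕ) : ℤ := [27440, 13720, 27440, 13720, 27440].getD l 1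
def nM (l : ℕ) : ℤ := [1, 1, 3, 1, 1].getD l 1
def dQ (l : ℕ) : ℤ :=
  [505984819200, 126496204800, 84330803200, 126496204800, 505984819200].getD l 1

section concrete
variable (hk : CharOK k)

lemma nz_seq (hk : CharOK k) (n : ℕ) (D : ℕ → ℤ) (h : ∀ i < n + 1, D i ∣ 210 ^ 40) : NZ k n D :=
  fun i hi => nz_of_dvd hk _ (h i hi)

def cG (b : Fin 9 → k) := tvc 8 8 4 (cf b) (cf b)
def cK (b : Fin 9 → k) := tvc 8 8 6 (cf b) (cf b)
def cH (b : Fin 9 → k) := tvc 4 4 2 (cK b) (cK b)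
def cM (b : Fin 9 → k) := tvc 8 4 4 (cf b) (cK b)
def cN (b : Fin 9 → k) := tvc 8 4 4 (cf b) (cH b)
def cP (b : Fin 9 → k) := tvc 8 4 4 (cG b) (cK b)
def cQ (b : Fin 9 → k) := tvc 8 4 4 (cG b) (cH b)

lemma covg_eq (b : Fin 9 → k) : covg b = form 8 (cG b) := by
  rw [covg, oct_form, tv_form 8 8 4 8 rfl]; rfl
lemma covk_eq (b : Fin 9 → k) : covk b = form 4 (cK b) := by
  rw [covk, oct_form, tv_form 8 8 6 4 rfl]; rfl
lemma covh_eq (b : Fin 9 → k) : covh b = form 4 (cH b) := by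
  rw [covh, covk_eq, tv_form 4 4 2 4 rfl]; rfl
lemma covm_eq (b : Fin 9 → k) : covm b = form 4 (cM b) := by
  rw [covm, covk_eq, oct_form, tv_form 8 4 4 4 rfl]; rfl
lemma covn_eq (b : Fin 9 → k) : covn b = form 4 (cN b) := by
  rw [covn, covh_eq, oct_form, tv_form 8 4 4 4 rfl]; rfl
lemma covp_eq (b : Fin 9 → k) : covp b = form 4 (cP b) := by
  rw [covp, covk_eq, covg_eq, tv_form 8 4 4 4 rfl]; rfl
lemma covq_eq (b : Fin 9 → k) : covq b = form 4 (cQ b) := by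
  rw [covq, covh_eq, covg_eq, tv_form 8 4 4 4 rfl]; rfl

lemma sf : Sc (k := k) 1 8 o1 o1 cf := by
  intro l hl
  refine ⟨fun b => cf b l, ⟨X ⟨l, hl⟩, isHomogeneous_X _ _, fun b => ?_⟩, fun b => rfl⟩
  simp only [eval₂_X, cf, dif_pos hl]

lemma nzf : NZ k 8 o1 := fun i _ => by simp [o1]

include hk

lemma hE (E : ℕ) (h : (E : ℤ) ∣ 210 ^ 40) : ((E : ℤ) : k) ≠ 0 := nz_of_dvd hk _ h

lemma nzG : NZ k 8 dG := nz_seq hk _ _ (by decide +kernel)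
lemma nzK : NZ k 4 dK := nz_seq hk _ _ (by decide +kernel)
lemma nzH : NZ k 4 dH := nz_seq hk _ _ (by decide +kernel)
lemma nzM : NZ k 4 dM := nz_seq hk _ _ (by decide +kernel)
lemma nzQ : NZ k 4 dQ := nz_seq hk _ _ (by decide +kernel)

lemma sG : Sc (k := k) 2 8 o1 dG cG :=
  Sc_sq 8 4 o1 dG sf nzf (hE hk _ (by decide +kernel)) (by decide +kernel)
lemma sK : Sc (k := k) 2 4 o1 dK cK :=
  Sc_sq 4 6 o1 dK sf nzf (hE hk _ (by decide +kernel)) (by decide +kernel)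
lemma sH : Sc (k := k) 4 4 o1 dH cH :=
  Sc_sq 4 2 o1 dH (sK hk) (nzK hk) (hE hk _ (by decide +kernel)) (by decide +kernel)
lemma sM : Sc (k := k) 3 4 nM dM cM :=
  Sc_cube 4 6 4 4 nM dM sf nzf (hE hk _ (by decide +kernel)) (by decide +kernel)
lemma sQ : Sc (k := k) 6 4 o1 dQ cQ :=
  Sc_bil 4 4 o1 dQ (sG hk) (sH hk) (nzG hk) (nzH hk) (hE hk _ (by decide +kernel))
    (by decide +kernel)

lemma s2 : Sc (k := k) 2 0 o1 (fun _ => 2 ^ 2 * 5 * 7) (fun b => tvc 8 8 8 (cf b) (cf b)) :=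
  Sc_sq 0 8 o1 _ sf nzf (hE hk _ (by decide +kernel)) (by decide +kernel)
lemma s3 : Sc (k := k) 3 0 (fun _ => 3) (fun _ => 2 ^ 4 * 5 ^ 2 * 7 ^ 3)
    (fun b => tvc 8 8 8 (cf b) (cG b)) :=
  Sc_cube 0 4 8 8 (fun _ => 3) _ sf nzf (hE hk _ (by decide +kernel)) (by decide +kernel)
lemma s4 : Sc (k := k) 4 0 o1 (fun _ => 2 ^ 9 * 3 * 7 ^ 4) (fun b => tvc 4 4 4 (cK b) (cK b)) :=
  Sc_sq 0 4 o1 _ (sK hk) (nzK hk) (hE hk _ (by decide +kernel)) (by decide +kernel)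
lemma s5 : Sc (k := k) 5 0 o1 (fun _ => 2 ^ 9 * 5 * 7 ^ 5) (fun b => tvc 4 4 4 (cM b) (cK b)) :=
  Sc_bil 0 4 o1 _ (sM hk) (sK hk) (nzM hk) (nzK hk) (hE hk _ (by decide +kernel))
    (by decide +kernel)
lemma s6 : Sc (k := k) 6 0 o1 (fun _ => 2 ^ 14 * 3 ^ 2 * 7 ^ 6)
    (fun b => tvc 4 4 4 (cK b) (cH b)) :=
  Sc_bil 0 4 o1 _ (sK hk) (sH hk) (nzK hk) (nzH hk) (hE hk _ (by decide +kernel))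
    (by decide +kernel)
lemma s7 : Sc (k := k) 7 0 o1 (fun _ => 2 ^ 14 * 3 * 5 * 7 ^ 7)
    (fun b => tvc 4 4 4 (cM b) (cH b)) :=
  Sc_bil 0 4 o1 _ (sM hk) (sH hk) (nzM hk) (nzH hk) (hE hk _ (by decide +kernel))
    (by decide +kernel)
lemma s8 : Sc (k := k) 8 0 o1 (fun _ => 2 ^ 17 * 3 * 5 ^ 2 * 7 ^ 9)
    (fun b => tvc 4 4 4 (cP b) (cH b)) :=
  Sc_L 0 4 4 4 o1 _ (sG hk) (sK hk) (sH hk) (nzG hk) (nzK hk) (nzH hk)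
    (hE hk _ (by decide +kernel)) (by decide +kernel)
lemma s9 : Sc (k := k) 9 0 o1 (fun _ => 2 ^ 19 * 3 ^ 2 * 5 * 7 ^ 9)
    (fun b => tvc 4 4 4 (cN b) (cH b)) :=
  Sc_Ls 0 4 4 4 o1 _ sf (sH hk) nzf (nzH hk)
    (hE hk _ (by decide +kernel)) (by decide +kernel)
lemma s10 : Sc (k := k) 10 0 o1 (fun _ => 2 ^ 22 * 3 ^ 2 * 5 ^ 2 * 7 ^ 11)
    (fun b => tvc 4 4 4 (cQ b) (cH b)) :=
  Sc_bil 0 4 o1 _ (sQ hk) (sH hk) (nzQ hk) (nzH hk) (hE hk _ (by decide +kernel))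
    (by decide +kernel)

omit hk in
lemma IH_of {d : ℕ} {N D : ℕ → ℤ} {w : (Fin 9 → k) → ℕ → k} (h : Sc d 0 N D w)
    (J : (Fin 9 → k) → k) (hN : (N 0 : k) ≠ 0)
    (hJ : ∀ b, (N 0 : k) * J b = (D 0 : k) * w b 0) : IH d J := by
  obtain ⟨φ, ⟨P, hP, h1⟩, h2⟩ := h 0 (by norm_num)
  refine ⟨P, hP, fun b => ?_⟩
  rw [← h1]
  apply mul_left_cancel₀ hN
  rw [hJ, h2]

lemma Jinv_int (i : ℕ) (h2 : 2 ≤ i) (h10 : i ≤ 10) : IH (k := k) i (Jinv i) := by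
  have h3 : (3 : k) ≠ 0 := by
    have := nz_of_dvd hk 3 (by decide +kernel)
    exact_mod_cast this
  interval_cases i
  · refine IH_of (s2 hk) _ (by simp [o1]) fun b => ?_
    simp only [Jinv, J2, oct_form, tv_form 8 8 8 0 rfl, cc_form, o1]
    push_cast; ring
  · refine IH_of (s3 hk) _ (by exact_mod_cast h3) fun b => ?_
    simp only [Jinv, J3, oct_form, covg_eq, tv_form 8 8 8 0 rfl, cc_form]
    push_cast; field_simp; ring
  · refine IH_of (s4 hk) _ (by simp [o1]) fun b => ?_
    simp only [Jinv, J4, covk_eq, tv_form 4 4 4 0 rfl, cc_form, o1]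
    push_cast; ring
  · refine IH_of (s5 hk) _ (by simp [o1]) fun b => ?_
    simp only [Jinv, J5, covk_eq, covm_eq, tv_form 4 4 4 0 rfl, cc_form, o1]
    push_cast; ring
  · refine IH_of (s6 hk) _ (by simp [o1]) fun b => ?_
    simp only [Jinv, J6, covk_eq, covh_eq, tv_form 4 4 4 0 rfl, cc_form, o1]
    push_cast; ring
  · refine IH_of (s7 hk) _ (by simp [o1]) fun b => ?_
    simp only [Jinv, J7, covm_eq, covh_eq, tv_form 4 4 4 0 rfl, cc_form, o1]
    push_cast; ring
  · refine IH_of (s8 hk) _ (by simp [o1]) fun b => ?_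
    simp only [Jinv, J8, covp_eq, covh_eq, tv_form 4 4 4 0 rfl, cc_form, o1]
    push_cast; ring
  · refine IH_of (s9 hk) _ (by simp [o1]) fun b => ?_
    simp only [Jinv, J9, covn_eq, covh_eq, tv_form 4 4 4 0 rfl, cc_form, o1]
    push_cast; ring
  · refine IH_of (s10 hk) _ (by simp [o1]) fun b => ?_
    simp only [Jinv, J10, covq_eq, covh_eq, tv_form 4 4 4 0 rfl, cc_form, o1]
    push_cast; ring

end concrete
end JT

/-- For a binary octavic `f` and `g ∈ GL₂(k)`, one has `J_i(g(f)) = (det g)^{4i} · J_i(f)`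
for `i = 2, ..., 10`; moreover each `J_i` is, as a polynomial in the coefficients
`a_0, ..., a_8`, homogeneous of degree `i` with integer coefficients. -/
theorem Jinv_transform (k : Type*) [Field k] (hk : CharOK k) (a : Fin 9 → k)
    (g : Matrix (Fin 2) (Fin 2) k) (hg : g.det ≠ 0) :
    ∀ i : ℕ, 2 ≤ i → i ≤ 10 →
      Jinv i (octAct g a) = g.det ^ (4 * i) * Jinv i a ∧
      ∃ P : MvPolynomial (Fin 9) ℤ, P.IsHomogeneous i ∧
        ∀ b : Fin 9 → k, Jinv i b = eval₂ (Int.castRingHom k) b P := by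
  exact fun i h2 h10 => ⟨JT.Jinv_act g a i h2 h10, JT.Jinv_int hk i h2 h10⟩
end
end

section
/- Let f be a binary octavic over an algebraically closed field k with char k ∉ {2,3,5,7}. If J_2(f) = J_3(f) = J_4(f) = J_5(f) = J_6(f) = J_7(f) = 0, then f has a multiple root, i.e. f(X,Y) is divisible by the square of a nonzero linear form in k[X,Y]. -/
noncomputable section

open MvPolynomial


variable {k : Type*} [Field k]

namespace Oct

/-- binary form of degree n with binomially normalized coefficients -/
def nf (n : ℕ) (b : ℕ → k) : MvPolynomial (Fin 2) k :=
  ∑ i ∈ Finset.range (n + 1), C ((n.choose i : k) * b i) * X 0 ^ i * X 1 ^ (n - i)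

lemma pd0 (n : ℕ) (b : ℕ → k) :
    pderiv (0 : Fin 2) (nf (n + 1) b) = C ((n + 1 : ℕ) : k) * nf n (fun i => b (i + 1)) := by
  unfold nf
  rw [map_sum, Finset.sum_range_succ', Finset.mul_sum]
  have h0 : pderiv (0 : Fin 2) (C (((n + 1).choose 0 : k) * b 0) * X 0 ^ 0 * X 1 ^ (n + 1 - 0))
      = 0 := by
    simp [pderiv_X]
  rw [h0, add_zero]
  refine Finset.sum_congr rfl fun i hi => ?_
  have e : n + 1 - (i + 1) = n - i := by omega
  have h1 := congrArg (Nat.cast (R := k)) (Nat.add_one_mul_choose_eq n i)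
  have h2 : (((n + 1).choose (i + 1) : ℕ) : k) * b (i + 1) * ((i + 1 : ℕ) : k)
      = ((n + 1 : ℕ) : k) * ((n.choose i : k) * b (i + 1)) := by
    push_cast at h1 ⊢
    linear_combination (-b (i + 1)) * h1
  have h3 : pderiv (0 : Fin 2) (C (((n + 1).choose (i + 1) : k) * b (i + 1)) * X 0 ^ (i + 1)
      * X 1 ^ (n + 1 - (i + 1)))
      = C ((((n + 1).choose (i + 1) : ℕ) : k) * b (i + 1) * ((i + 1 : ℕ) : k)) * X 0 ^ i
        * X 1 ^ (n - i) := by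
    rw [e]
    simp [pderiv_mul, pderiv_X]
    ring
  rw [h3, h2, map_mul]
  ring

lemma pd1 (n : ℕ) (b : ℕ → k) :
    pderiv (1 : Fin 2) (nf (n + 1) b) = C ((n + 1 : ℕ) : k) * nf n b := by
  unfold nf
  rw [map_sum, Finset.sum_range_succ, Finset.mul_sum]
  have h0 : pderiv (1 : Fin 2) (C (((n + 1).choose (n + 1) : k) * b (n + 1)) * X 0 ^ (n + 1)
      * X 1 ^ (n + 1 - (n + 1))) = 0 := by
    simp [pderiv_X]
  rw [h0, add_zero]
  refine Finset.sum_congr rfl fun i hi => ?_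
  have hi' : i ≤ n := by simpa [Nat.lt_succ_iff] using hi
  have e : n + 1 - i = (n - i) + 1 := by omega
  have h1 := congrArg (Nat.cast (R := k)) (Nat.choose_mul_succ_eq n i)
  rw [e] at h1
  have h2 : (((n + 1).choose i : ℕ) : k) * b i * ((n - i + 1 : ℕ) : k)
      = ((n + 1 : ℕ) : k) * ((n.choose i : k) * b i) := by
    rw [Nat.cast_mul, Nat.cast_mul] at h1
    linear_combination (-b i) * h1
  have h3 : pderiv (1 : Fin 2) (C (((n + 1).choose i : k) * b i) * X 0 ^ i
      * X 1 ^ (n + 1 - i))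
      = C ((((n + 1).choose i : ℕ) : k) * b i * ((n - i + 1 : ℕ) : k)) * X 0 ^ i
        * X 1 ^ (n - i) := by
    rw [e]
    simp [pderiv_mul, pderiv_X]
    ring
  rw [h3, h2, map_mul]
  ring

lemma it0 (p : ℕ) : ∀ (n : ℕ) (c : k) (b : ℕ → k),
    (fun p => pderiv (0 : Fin 2) p)^[p] (C c * nf (n + p) b)
      = C (c * ((n + p).descFactorial p : k)) * nf n (fun i => b (i + p)) := by
  induction p with
  | zero => intro n c b; simp
  | succ p ih =>
    intro n c b
    rw [Function.iterate_succ_apply]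
    have : pderiv (0 : Fin 2) (C c * nf (n + (p + 1)) b)
        = C (c * ((n + p + 1 : ℕ) : k)) * nf (n + p) (fun i => b (i + 1)) := by
      rw [pderiv_C_mul, ← add_assoc, pd0, map_mul]; ring
    simp only [this, ih]
    have e : n + (p + 1) = (n + p) + 1 := by ring
    rw [e, Nat.succ_descFactorial_succ]
    push_cast
    simp only [mul_assoc, add_assoc, add_comm, add_left_comm]

lemma it1 (p : ℕ) : ∀ (n : ℕ) (c : k) (b : ℕ → k),
    (fun p => pderiv (1 : Fin 2) p)^[p] (C c * nf (n + p) b)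
      = C (c * ((n + p).descFactorial p : k)) * nf n b := by
  induction p with
  | zero => intro n c b; simp
  | succ p ih =>
    intro n c b
    rw [Function.iterate_succ_apply]
    have : pderiv (1 : Fin 2) (C c * nf (n + (p + 1)) b)
        = C (c * ((n + p + 1 : ℕ) : k)) * nf (n + p) b := by
      rw [pderiv_C_mul, ← add_assoc, pd1, map_mul]; ring
    simp only [this, ih]
    have e : n + (p + 1) = (n + p) + 1 := by ring
    rw [e, Nat.succ_descFactorial_succ]
    push_cast
    simp only [mul_assoc, add_assoc, add_comm, add_left_comm]

lemma it01 (n p q : ℕ) (b : ℕ → k) :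
    (fun p => pderiv (0 : Fin 2) p)^[p] ((fun p => pderiv (1 : Fin 2) p)^[q] (nf (n + p + q) b))
      = C ((n + p + q).descFactorial (p + q) : k) * nf n (fun i => b (i + p)) := by
  have h := it1 q (n + p) 1 b
  rw [C_1, one_mul, one_mul] at h
  rw [h, it0]
  congr 2
  rw [← Nat.cast_mul]
  congr 1
  have := Nat.descFactorial_mul_descFactorial (n := n + p + q) (k := q) (m := p + q) (by omega)
  rw [← this]
  have e1 : n + p + q - q = n + p := by omega
  have e2 : p + q - q = p := by omega
  rw [e1, e2]
  ring

lemma trans_nf (n m r : ℕ) (b c : ℕ → k) (hn : ((n + r).factorial : k) ≠ 0)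
    (hm : ((m + r).factorial : k) ≠ 0) :
    transvectant (n + r) (m + r) r (nf (n + r) b) (nf (m + r) c) =
      ∑ j ∈ Finset.range (r + 1), C ((-1 : k) ^ j * (r.choose j : k)) *
        nf n (fun i => b (i + (r - j))) * nf m (fun i => c (i + j)) := by
  unfold transvectant
  rw [Finset.mul_sum]
  refine Finset.sum_congr rfl fun j hj => ?_
  have hj' : j ≤ r := by simpa [Nat.lt_succ_iff] using hj
  obtain ⟨s, rfl⟩ := Nat.exists_eq_add_of_le' hj'
  have e : s + j - j = s := by omega
  have h1 := it01 n s j b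
  have h2 := it01 m j s c
  rw [e]
  rw [show n + (s + j) = n + s + j by ring, show m + (s + j) = m + j + s by ring, h1, h2]
  have f1 := Nat.factorial_mul_descFactorial (n := n + s + j) (k := s + j) (by omega)
  have f2 := Nat.factorial_mul_descFactorial (n := m + j + s) (k := j + s) (by omega)
  have g1 := congrArg (Nat.cast (R := k)) f1
  have g2 := congrArg (Nat.cast (R := k)) f2
  rw [show n + s + j - (s + j) = n by omega] at g1 ⊢
  rw [show m + j + s - (j + s) = m by omega] at g2
  rw [show m + j + s - (s + j) = m by omega]
  rw [show n + (s + j) = n + s + j by ring] at hn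
  rw [show m + (s + j) = m + j + s by ring] at hm
  have key : ((m.factorial * n.factorial : ℕ) : k) /
      (((n + s + j).factorial * (m + j + s).factorial : ℕ) : k)
      * (((n + s + j).descFactorial (s + j) : ℕ) : k)
      * (((m + j + s).descFactorial (j + s) : ℕ) : k) = 1 := by
    push_cast at g1 g2 ⊢
    rw [← g1] at hn
    rw [← g2] at hm
    rw [← g1, ← g2]
    have a1 := left_ne_zero_of_mul hn
    have a2 := right_ne_zero_of_mul hn
    have a3 := left_ne_zero_of_mul hm
    have a4 := right_ne_zero_of_mul hm
    field_simp
  have key' := congrArg (C (σ := Fin 2)) key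
  rw [map_mul, map_mul, C_1] at key'
  linear_combination (C ((-1 : k) ^ j * ((s + j).choose j : k)) *
        nf n (fun i => b (i + s)) * nf m (fun i => c (i + j))) * key'

/-- coefficients of the covariant of order 4 and degree 2 -/
def K (b : ℕ → k) : ℕ → k
  | 0 => 2 * (b 0 * b 6 - 6 * b 1 * b 5 + 15 * b 2 * b 4 - 10 * b 3 ^ 2)
  | 1 => b 0 * b 7 - 5 * b 1 * b 6 + 9 * b 2 * b 5 - 5 * b 3 * b 4
  | 2 => (b 0 * b 8 - 2 * b 1 * b 7 - 8 * b 2 * b 6 + 34 * b 3 * b 5 - 25 * b 4 ^ 2) / 3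
  | 3 => b 1 * b 8 - 5 * b 2 * b 7 + 9 * b 3 * b 6 - 5 * b 4 * b 5
  | 4 => 2 * (b 2 * b 8 - 6 * b 3 * b 7 + 15 * b 4 * b 6 - 10 * b 5 ^ 2)
  | _ => 0

def H (c : ℕ → k) : ℕ → k
  | 0 => 2 * (c 0 * c 2 - c 1 ^ 2)
  | 1 => c 0 * c 3 - c 1 * c 2
  | 2 => (c 0 * c 4 + 2 * c 1 * c 3 - 3 * c 2 ^ 2) / 3
  | 3 => c 1 * c 4 - c 2 * c 3
  | 4 => 2 * (c 2 * c 4 - c 3 ^ 2)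
  | _ => 0

def M (b c : ℕ → k) (i : ℕ) : k :=
  b (i + 4) * c 0 - 4 * b (i + 3) * c 1 + 6 * b (i + 2) * c 2 - 4 * b (i + 1) * c 3 + b i * c 4

def P (c d : ℕ → k) : k :=
  c 4 * d 0 - 4 * c 3 * d 1 + 6 * c 2 * d 2 - 4 * c 1 * d 3 + c 0 * d 4

def E (b : ℕ → k) : k :=
  b 0 * b 8 - 8 * b 1 * b 7 + 28 * b 2 * b 6 - 56 * b 3 * b 5 + 35 * b 4 ^ 2

lemma fac_ne (h2 : (2 : k) ≠ 0) (h3 : (3 : k) ≠ 0) (h5 : (5 : k) ≠ 0) (h7 : (7 : k) ≠ 0) :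
    ((Nat.factorial 8 : ℕ) : k) ≠ 0 ∧ ((Nat.factorial 4 : ℕ) : k) ≠ 0 := by
  have e8 : ((Nat.factorial 8 : ℕ) : k) = 2 ^ 7 * 3 ^ 2 * 5 * 7 := by
    norm_num [Nat.factorial]
  have e4 : ((Nat.factorial 4 : ℕ) : k) = 2 ^ 3 * 3 := by
    norm_num [Nat.factorial]
  rw [e8, e4]
  constructor <;> simp [h2, h3, h5, h7]

lemma hC_inv (h3 : (3 : k) ≠ 0) : (C (3⁻¹ : k) : MvPolynomial (Fin 2) k) * 3 = 1 := by
  have h : (C ((3⁻¹ : k) * 3) : MvPolynomial (Fin 2) k) = 1 := by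
    rw [inv_mul_cancel₀ h3, C_1]
  rw [map_mul, map_ofNat] at h
  exact h

lemma cov_k (h3 : (3 : k) ≠ 0) (h8 : ((Nat.factorial 8 : ℕ) : k) ≠ 0) (b : ℕ → k) :
    transvectant 8 8 6 (nf 8 b) (nf 8 b) = nf 4 (K b) := by
  have h := trans_nf 2 2 6 b b h8 h8
  norm_num only [] at h
  have hC := hC_inv h3
  rw [h]
  simp only [nf, Finset.sum_range_succ, Finset.sum_range_zero, K, div_eq_mul_inv]
  simp [Nat.choose, map_ofNat]
  linear_combination (-2 * X 0 ^ 2 * X 1 ^ 2 * (C (b 0) * C (b 8) - 2 * C (b 1) * C (b 7)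
    - 8 * C (b 2) * C (b 6) + 34 * C (b 3) * C (b 5) - 25 * C (b 4) ^ 2)) * hC

lemma cov_h (h3 : (3 : k) ≠ 0) (h4 : ((Nat.factorial 4 : ℕ) : k) ≠ 0) (b : ℕ → k) :
    transvectant 4 4 2 (nf 4 b) (nf 4 b) = nf 4 (H b) := by
  have h := trans_nf 2 2 2 b b h4 h4
  norm_num only [] at h
  have hC := hC_inv h3
  rw [h]
  simp only [nf, Finset.sum_range_succ, Finset.sum_range_zero, H, div_eq_mul_inv]
  simp [Nat.choose, map_ofNat]
  linear_combination (-2 * X 0 ^ 2 * X 1 ^ 2 * (C (b 0) * C (b 4) + 2 * C (b 1) * C (b 3)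
    - 3 * C (b 2) ^ 2)) * hC

lemma cov_m (h8 : ((Nat.factorial 8 : ℕ) : k) ≠ 0) (h4 : ((Nat.factorial 4 : ℕ) : k) ≠ 0)
    (b c : ℕ → k) :
    transvectant 8 4 4 (nf 8 b) (nf 4 c) = nf 4 (M b c) := by
  have h := trans_nf 4 0 4 b c h8 h4
  norm_num only [] at h
  rw [h]
  simp only [nf, Finset.sum_range_succ, Finset.sum_range_zero, M]
  simp [Nat.choose, map_ofNat]
  ring

lemma inv_p (h4 : ((Nat.factorial 4 : ℕ) : k) ≠ 0) (b c : ℕ → k) :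
    constantCoeff (transvectant 4 4 4 (nf 4 b) (nf 4 c)) = P b c := by
  have h := trans_nf 0 0 4 b c h4 h4
  norm_num only [] at h
  rw [h]
  simp only [nf, Finset.sum_range_succ, Finset.sum_range_zero, P]
  simp [Nat.choose, map_ofNat]
  ring

lemma inv_e (h8 : ((Nat.factorial 8 : ℕ) : k) ≠ 0) (b : ℕ → k) :
    constantCoeff (transvectant 8 8 8 (nf 8 b) (nf 8 b)) = 2 * E b := by
  have h := trans_nf 0 0 8 b b h8 h8
  norm_num only [] at h
  rw [h]
  simp only [nf, Finset.sum_range_succ, Finset.sum_range_zero, E]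
  simp [Nat.choose, map_ofNat]
  ring

/-- coefficients after substituting Y ↦ Y + tX -/
def S (t : k) (b : ℕ → k) (i : ℕ) : k :=
  ∑ l ∈ Finset.range (i + 1), (i.choose l : k) * b l * t ^ (i - l)

def W (b : ℕ → k) (i : ℕ) : k := b (8 - i)

def DR (b : ℕ → k) : Prop :=
  ∃ x0 y0 : k, ¬(x0 = 0 ∧ y0 = 0) ∧ (C y0 * X 0 - C x0 * X 1) ^ 2 ∣ nf 8 b

def Good (b : ℕ → k) : Prop :=
  E b = 0 ∧ P (K b) (K b) = 0 ∧ P (M b (K b)) (K b) = 0 ∧ P (K b) (H (K b)) = 0 ∧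
    P (M b (K b)) (H (K b)) = 0

lemma nf_shear (t : k) (b : ℕ → k) :
    nf 8 b = aeval (fun i : Fin 2 => if i = 0 then X 0 else X 1 - C t * X 0 :
      Fin 2 → MvPolynomial (Fin 2) k) (nf 8 (S t b)) := by
  simp only [nf, S, Finset.sum_range_succ, Finset.sum_range_zero]
  simp [Nat.choose, map_ofNat, algebraMap_eq]
  ring

lemma nf_swap (b : ℕ → k) :
    nf 8 b = aeval (fun i : Fin 2 => if i = 0 then X 1 else X 0 :
      Fin 2 → MvPolynomial (Fin 2) k) (nf 8 (W b)) := by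
  simp only [nf, W, Finset.sum_range_succ, Finset.sum_range_zero]
  simp [Nat.choose, map_ofNat, algebraMap_eq]
  ring

lemma DR_shear (t : k) (b : ℕ → k) (h : DR (S t b)) : DR b := by
  obtain ⟨x, y, hxy, hd⟩ := h
  refine ⟨x, y + t * x, ?_, ?_⟩
  · rintro ⟨rfl, h⟩
    exact hxy ⟨rfl, by simpa using h⟩
  · rw [nf_shear t b]
    refine Dvd.dvd.trans (dvd_of_eq ?_) (map_dvd _ hd)
    simp [algebraMap_eq]
    ring

lemma DR_swap (b : ℕ → k) (h : DR (W b)) : DR b := by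
  obtain ⟨x, y, hxy, hd⟩ := h
  refine ⟨y, x, fun h => hxy ⟨h.2, h.1⟩, ?_⟩
  rw [nf_swap b]
  refine Dvd.dvd.trans (dvd_of_eq ?_) (map_dvd _ hd)
  simp [algebraMap_eq]
  ring

lemma DR_smul (s : k) (b : ℕ → k) (h : DR b) : DR (fun i => s * b i) := by
  obtain ⟨x, y, hxy, hd⟩ := h
  refine ⟨x, y, hxy, ?_⟩
  have : nf 8 (fun i => s * b i) = C s * nf 8 b := by
    simp only [nf, Finset.mul_sum, map_mul]
    exact Finset.sum_congr rfl fun i _ => by ring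
  rw [this]
  exact Dvd.dvd.mul_left hd _

lemma S0 (t : k) (b : ℕ → k) : S t b 0 = b 0 := by
  simp [S]
lemma S1 (t : k) (b : ℕ → k) : S t b 1 = b 1 + t * b 0 := by
  simp [S, Finset.sum_range_succ]; ring
lemma S2 (t : k) (b : ℕ → k) : S t b 2 = b 2 + 2 * t * b 1 + t ^ 2 * b 0 := by
  simp [S, Finset.sum_range_succ, Nat.choose]; ring
lemma S3 (t : k) (b : ℕ → k) :
    S t b 3 = b 3 + 3 * t * b 2 + 3 * t ^ 2 * b 1 + t ^ 3 * b 0 := by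
  simp [S, Finset.sum_range_succ, Nat.choose]; ring
lemma S4 (t : k) (b : ℕ → k) :
    S t b 4 = b 4 + 4 * t * b 3 + 6 * t ^ 2 * b 2 + 4 * t ^ 3 * b 1 + t ^ 4 * b 0 := by
  simp [S, Finset.sum_range_succ, Nat.choose]; ring
lemma S5 (t : k) (b : ℕ → k) :
    S t b 5 = b 5 + 5 * t * b 4 + 10 * t ^ 2 * b 3 + 10 * t ^ 3 * b 2 + 5 * t ^ 4 * b 1
      + t ^ 5 * b 0 := by
  simp [S, Finset.sum_range_succ, Nat.choose]; ring
lemma S6 (t : k) (b : ℕ → k) :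
    S t b 6 = b 6 + 6 * t * b 5 + 15 * t ^ 2 * b 4 + 20 * t ^ 3 * b 3 + 15 * t ^ 4 * b 2
      + 6 * t ^ 5 * b 1 + t ^ 6 * b 0 := by
  simp [S, Finset.sum_range_succ, Nat.choose]; ring
lemma S7 (t : k) (b : ℕ → k) :
    S t b 7 = b 7 + 7 * t * b 6 + 21 * t ^ 2 * b 5 + 35 * t ^ 3 * b 4 + 35 * t ^ 4 * b 3
      + 21 * t ^ 5 * b 2 + 7 * t ^ 6 * b 1 + t ^ 7 * b 0 := by
  simp [S, Finset.sum_range_succ, Nat.choose]; ring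
lemma S8 (t : k) (b : ℕ → k) :
    S t b 8 = b 8 + 8 * t * b 7 + 28 * t ^ 2 * b 6 + 56 * t ^ 3 * b 5 + 70 * t ^ 4 * b 4
      + 56 * t ^ 5 * b 3 + 28 * t ^ 6 * b 2 + 8 * t ^ 7 * b 1 + t ^ 8 * b 0 := by
  simp [S, Finset.sum_range_succ, Nat.choose]; ring

lemma K_shear (h3 : (3 : k) ≠ 0) (t : k) (b : ℕ → k) :
    K (S t b) 0 = S t (K b) 0 ∧ K (S t b) 1 = S t (K b) 1 ∧ K (S t b) 2 = S t (K b) 2 ∧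
    K (S t b) 3 = S t (K b) 3 ∧ K (S t b) 4 = S t (K b) 4 := by
  refine ⟨?_, ?_, ?_, ?_, ?_⟩ <;>
  simp only [S0, S1, S2, S3, S4, K, S5, S6, S7, S8] <;> field_simp <;> ring

lemma H_shear (h3 : (3 : k) ≠ 0) (t : k) (b : ℕ → k) :
    H (S t b) 0 = S t (H b) 0 ∧ H (S t b) 1 = S t (H b) 1 ∧ H (S t b) 2 = S t (H b) 2 ∧
    H (S t b) 3 = S t (H b) 3 ∧ H (S t b) 4 = S t (H b) 4 := by
  refine ⟨?_, ?_, ?_, ?_, ?_⟩ <;>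
  simp only [S0, S1, S2, S3, S4, H] <;> field_simp <;> ring

lemma M_shear (t : k) (b c : ℕ → k) :
    M (S t b) (S t c) 0 = S t (M b c) 0 ∧ M (S t b) (S t c) 1 = S t (M b c) 1 ∧
    M (S t b) (S t c) 2 = S t (M b c) 2 ∧ M (S t b) (S t c) 3 = S t (M b c) 3 ∧
    M (S t b) (S t c) 4 = S t (M b c) 4 := by
  refine ⟨?_, ?_, ?_, ?_, ?_⟩ <;>
  norm_num only [S0, S1, S2, S3, S4, S5, S6, S7, S8, M] <;> ring

lemma P_shear (t : k) (c d : ℕ → k) : P (S t c) (S t d) = P c d := by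
  simp only [S0, S1, S2, S3, S4, P]; ring

lemma E_shear (t : k) (b : ℕ → k) : E (S t b) = E b := by
  simp only [S0, S1, S2, S3, S4, S5, S6, S7, S8, E]; ring

def Ag (c d : ℕ → k) : Prop := c 0 = d 0 ∧ c 1 = d 1 ∧ c 2 = d 2 ∧ c 3 = d 3 ∧ c 4 = d 4

lemma P_congr {c d c' d' : ℕ → k} (h : Ag c c') (h' : Ag d d') : P c d = P c' d' := by
  obtain ⟨a0, a1, a2, a3, a4⟩ := h
  obtain ⟨b0, b1, b2, b3, b4⟩ := h'
  simp only [P, *]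

lemma H_congr {c c' : ℕ → k} (h : Ag c c') : Ag (H c) (H c') := by
  obtain ⟨a0, a1, a2, a3, a4⟩ := h
  simp only [Ag, H, and_self, *]

lemma M_congr {b c c' : ℕ → k} (h : Ag c c') : M b c = M b c' := by
  obtain ⟨a0, a1, a2, a3, a4⟩ := h
  funext i
  simp only [M, *]

lemma Ag_trans {c d e : ℕ → k} (h : Ag c d) (h' : Ag d e) : Ag c e :=
  ⟨h.1.trans h'.1, h.2.1.trans h'.2.1, h.2.2.1.trans h'.2.2.1, h.2.2.2.1.trans h'.2.2.2.1,
    h.2.2.2.2.trans h'.2.2.2.2⟩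

lemma Good_shear (h3 : (3 : k) ≠ 0) (t : k) (b : ℕ → k) (h : Good b) : Good (S t b) := by
  obtain ⟨e, p1, p2, p3, p4⟩ := h
  have hK : Ag (K (S t b)) (S t (K b)) := K_shear h3 t b
  have hH : Ag (H (K (S t b))) (S t (H (K b))) := Ag_trans (H_congr hK) (H_shear h3 t _)
  have hM : Ag (M (S t b) (K (S t b))) (S t (M b (K b))) := by
    rw [M_congr hK]; exact M_shear t b _
  refine ⟨?_, ?_, ?_, ?_, ?_⟩
  · rw [E_shear, e]
  · rw [P_congr hK hK, P_shear, p1]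
  · rw [P_congr hM hK, P_shear, p2]
  · rw [P_congr hK hH, P_shear, p3]
  · rw [P_congr hM hH, P_shear, p4]

def V (c : ℕ → k) (i : ℕ) : k := c (4 - i)

lemma K_swap (b : ℕ → k) : Ag (K (W b)) (V (K b)) := by
  refine ⟨?_, ?_, ?_, ?_, ?_⟩ <;> simp [K, W, V] <;> ring_nf <;> simp

lemma H_swap (b : ℕ → k) : Ag (H (V b)) (V (H b)) := by
  refine ⟨?_, ?_, ?_, ?_, ?_⟩ <;> simp [H, V] <;> ring_nf <;> simp

lemma M_swap (b c : ℕ → k) : Ag (M (W b) (V c)) (V (M b c)) := by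
  refine ⟨?_, ?_, ?_, ?_, ?_⟩ <;> simp [M, V, W] <;> ring

lemma P_swap (c d : ℕ → k) : P (V c) (V d) = P c d := by
  simp [P, V]; ring

lemma Good_swap (b : ℕ → k) (h : Good b) : Good (W b) := by
  obtain ⟨e, p1, p2, p3, p4⟩ := h
  have hK : Ag (K (W b)) (V (K b)) := K_swap b
  have hH : Ag (H (K (W b))) (V (H (K b))) := Ag_trans (H_congr hK) (H_swap _)
  have hM : Ag (M (W b) (K (W b))) (V (M b (K b))) := by
    rw [M_congr hK]; exact M_swap b _
  refine ⟨?_, ?_, ?_, ?_, ?_⟩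
  · rw [← e]; simp [E, W]; ring
  · rw [P_congr hK hK, P_swap, p1]
  · rw [P_congr hM hK, P_swap, p2]
  · rw [P_congr hK hH, P_swap, p3]
  · rw [P_congr hM hH, P_swap, p4]

lemma DR_X (b : ℕ → k) (h0 : b 0 = 0) (h1 : b 1 = 0) : DR b := by
  refine ⟨0, 1, by simp, ?_⟩
  simp only [nf, Finset.sum_range_succ, Finset.sum_range_zero, h0, h1]
  simp
  refine ⟨∑ i ∈ Finset.range 7, C (((8).choose (i + 2) : k) * b (i + 2)) * X 0 ^ i
    * X 1 ^ (6 - i), ?_⟩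
  simp [Finset.sum_range_succ, Nat.choose, map_ofNat]
  ring

lemma DR_Y (b : ℕ → k) (h0 : b 8 = 0) (h1 : b 7 = 0) : DR b :=
  DR_swap _ (DR_X _ h0 h1)

lemma caseB1 (h2 : (2 : k) ≠ 0) (h3 : (3 : k) ≠ 0) (h5 : (5 : k) ≠ 0) (c : ℕ → k)
    (e : E c = 0) (k0 : K c 0 = 0) (k1 : K c 1 = 0) (k2 : K c 2 = 0) (k3 : K c 3 = 0)
    (c0 : c 0 = 0) (c1 : c 1 = 1) (c2 : c 2 = 0) : DR c := by
  simp only [E, K, c0, c1, c2] at e k0 k1 k2 k3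
  rw [div_eq_zero_iff, or_iff_left h3] at k2
  rw [mul_eq_zero, or_iff_right h2] at k0
  have c5 : 3 * c 5 = -5 * c 3 ^ 2 := by
    refine mul_left_cancel₀ h2 ?_
    linear_combination -k0
  have c6 : c 6 = - c 3 * c 4 := by
    refine mul_left_cancel₀ h5 ?_
    linear_combination -k1
  have hr : 64 * c 3 ^ 3 = -27 * c 4 ^ 2 := by
    refine mul_left_cancel₀ h5 ?_
    linear_combination e - 4 * k2 + 64 * c 3 * c5
  by_cases z3 : c 3 = 0
  · have z4 : c 4 = 0 := by
      rw [z3] at hr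
      have : 3 * 3 * 3 * (c 4 * c 4) = 0 := by linear_combination hr
      simpa [h3] using this
    have z5 : c 5 = 0 := by
      rw [z3] at c5; simpa [h3] using c5
    refine DR_Y _ ?_ ?_
    · rw [z3, z4] at k3; linear_combination k3
    · rw [z3, z4] at k2
      have : 2 * c 7 = 0 := by linear_combination -k2
      simpa [h2] using this
  · obtain ⟨v, hv⟩ : ∃ v : k, 8 * c 3 * v = -3 * c 4 := by
      refine ⟨-3 * c 4 / (8 * c 3), ?_⟩
      have h8 : (8 : k) ≠ 0 := by
        have : (8 : k) = 2 ^ 3 := by norm_num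
        rw [this]; exact pow_ne_zero _ h2
      field_simp
    have v3 : c 3 = -3 * v ^ 2 := by
      have : 2 ^ 6 * c 3 ^ 2 * (c 3 + 3 * v ^ 2) = 0 := by
        linear_combination hr + 3 * (8 * c 3 * v - 3 * c 4) * hv
      have h' : (2 : k) ^ 6 * c 3 ^ 2 ≠ 0 := by simp [h2, z3]
      have := (mul_eq_zero.mp this).resolve_left h'
      linear_combination this
    have v4 : c 4 = 8 * v ^ 3 := by
      refine mul_left_cancel₀ h3 ?_
      linear_combination hv - 8 * v * v3
    have v5 : c 5 = -15 * v ^ 4 := by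
      refine mul_left_cancel₀ h3 ?_
      rw [c5, v3]; ring
    have v6 : c 6 = 24 * v ^ 5 := by rw [c6, v3, v4]; ring
    have v7 : c 7 = -35 * v ^ 6 := by
      refine mul_left_cancel₀ h2 ?_
      rw [v3, v4, v5] at k2
      linear_combination -k2
    have v8 : c 8 = 48 * v ^ 7 := by
      rw [v3, v4, v5, v6] at k3
      linear_combination k3
    refine ⟨1, v, by simp, ?_⟩
    have : nf 8 c = (C v * X 0 - C 1 * X 1) ^ 2 *
        (8 * X 0 * (C v * X 0 - X 1) ^ 4 * (X 1 + 6 * C v * X 0)) := by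
      simp only [nf, Finset.sum_range_succ, Finset.sum_range_zero, c0, c1, c2, v3, v4, v5, v6,
        v7, v8]
      simp [Nat.choose, map_ofNat]
      ring
    rw [this]
    exact dvd_mul_right _ _

lemma K_smul (s : k) (b : ℕ → k) (i : ℕ) : K (fun i => s * b i) i = s ^ 2 * K b i := by
  unfold K; split <;> ring

lemma E_smul (s : k) (b : ℕ → k) : E (fun i => s * b i) = s ^ 2 * E b := by
  unfold E; ring

lemma caseB (h2 : (2 : k) ≠ 0) (h3 : (3 : k) ≠ 0) (h5 : (5 : k) ≠ 0) (b : ℕ → k)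
    (e : E b = 0) (k0 : K b 0 = 0) (k1 : K b 1 = 0) (k2 : K b 2 = 0) (k3 : K b 3 = 0)
    (b0 : b 0 = 0) : DR b := by
  by_cases b1 : b 1 = 0
  · exact DR_X b b0 b1
  obtain ⟨K0, K1, K2, K3, -⟩ := K_shear h3 (-b 2 / (2 * b 1)) b
  have hE := E_shear (-b 2 / (2 * b 1)) b
  have T0 := S0 (-b 2 / (2 * b 1)) b
  have T1 := S1 (-b 2 / (2 * b 1)) b
  have T2 := S2 (-b 2 / (2 * b 1)) b
  apply DR_shear (-b 2 / (2 * b 1))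
  rw [S0, k0] at K0
  rw [S1, k0, k1] at K1
  rw [S2, k0, k1, k2] at K2
  rw [S3, k0, k1, k2, k3] at K3
  rw [b0] at T0 T1 T2
  have T2' : S (-b 2 / (2 * b 1)) b 2 = 0 := by rw [T2]; field_simp; ring
  generalize S (-b 2 / (2 * b 1)) b = d at *
  have d1 : d 1 ≠ 0 := by rw [T1]; simpa using b1
  have hd : d = fun i => d 1 * (d i / d 1) := by funext i; field_simp
  have hd2 : d 1 ^ 2 ≠ 0 := pow_ne_zero _ d1
  rw [hd] at hE K0 K1 K2 K3 ⊢
  rw [K_smul] at K0 K1 K2 K3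
  rw [E_smul, e] at hE
  apply DR_smul
  apply caseB1 h2 h3 h5
  · simpa [hd2, d1] using hE
  · simpa [hd2, d1] using K0
  · simpa [hd2, d1] using K1
  · simpa [hd2, d1] using K2
  · simpa [hd2, d1] using K3
  · simp [T0]
  · field_simp
  · simp [T2']

lemma caseA1 (h2 : (2 : k) ≠ 0) (h3 : (3 : k) ≠ 0) (h5 : (5 : k) ≠ 0) (c : ℕ → k)
    (e : E c = 0) (k0 : K c 0 = 0) (k1 : K c 1 = 0) (k2 : K c 2 = 0) (k3 : K c 3 ≠ 0)
    (k4 : K c 4 = 0) (c0 : c 0 = 1) (c1 : c 1 = 0) (c2 : c 2 = 0) : DR c := by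
  simp only [E, K, c0, c1, c2] at e k0 k1 k2 k3 k4
  rw [div_eq_zero_iff, or_iff_left h3] at k2
  rw [mul_eq_zero, or_iff_right h2] at k0 k4
  have c6 : c 6 = 10 * c 3 ^ 2 := by linear_combination k0
  have c7 : c 7 = 5 * c 3 * c 4 := by linear_combination k1
  have r1 : 3 * c 3 * c 5 = 2 * c 4 ^ 2 := by
    have : 2 * 3 * 5 * (3 * c 3 * c 5 - 2 * c 4 ^ 2) = 0 := by linear_combination k2 - e
    have := (mul_eq_zero.mp this).resolve_left (by simp [h2, h3, h5])
    linear_combination this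
  have r2 : c 5 ^ 2 = 12 * c 3 ^ 2 * c 4 := by
    rw [c6, c7] at k4
    have : 2 * 5 * (c 5 ^ 2 - 12 * c 3 ^ 2 * c 4) = 0 := by linear_combination -k4
    have := (mul_eq_zero.mp this).resolve_left (by simp [h2, h5])
    linear_combination this
  by_cases z4 : c 4 = 0
  · have z5 : c 5 = 0 := by
      rw [z4] at r2; simpa using r2
    apply DR_Y
    · rw [z4, z5] at k2; linear_combination k2
    · rw [c7, z4]; ring
  · exfalso
    have r3 : c 4 ^ 3 = 27 * c 3 ^ 4 := by
      have : 2 * 2 * c 4 * (c 4 ^ 3 - 27 * c 3 ^ 4) = 0 := by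
        linear_combination (-(3 * c 3 * c 5 + 2 * c 4 ^ 2)) * r1 + 9 * c 3 ^ 2 * r2
      have := (mul_eq_zero.mp this).resolve_left (by simp [h2, z4])
      linear_combination this
    have z3 : c 3 ≠ 0 := by
      intro h; rw [h] at r3; apply z4; simpa using r3
    apply k3
    rw [c6]
    have : 3 * c 3 * (0 * c 8 - 5 * 0 * c 7 + 9 * c 3 * (10 * c 3 ^ 2) - 5 * c 4 * c 5) = 0 := by
      linear_combination -5 * c 4 * r1 - 10 * r3
    exact (mul_eq_zero.mp this).resolve_left (by simp [h3, z3])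

lemma caseA (h2 : (2 : k) ≠ 0) (h3 : (3 : k) ≠ 0) (h5 : (5 : k) ≠ 0) (d : ℕ → k)
    (e : E d = 0) (k0 : K d 0 = 0) (k1 : K d 1 = 0) (k2 : K d 2 = 0) (k3 : K d 3 ≠ 0)
    (k4 : K d 4 = 0) (c1 : d 1 = 0) (c2 : d 2 = 0) : DR d := by
  by_cases d1 : d 0 = 0
  · exact DR_X d d1 c1
  have hd : d = fun i => d 0 * (d i / d 0) := by funext i; field_simp
  have hd2 : d 0 ^ 2 ≠ 0 := pow_ne_zero _ d1
  rw [hd] at e k0 k1 k2 k3 k4 ⊢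
  rw [K_smul] at k0 k1 k2 k3 k4
  rw [E_smul] at e
  apply DR_smul
  apply caseA1 h2 h3 h5
  · simpa [hd2, d1] using e
  · simpa [hd2, d1] using k0
  · simpa [hd2, d1] using k1
  · simpa [hd2, d1] using k2
  · exact right_ne_zero_of_mul k3
  · simpa [hd2, d1] using k4
  · field_simp
  · simp [c1]
  · simp [c2]

lemma exists_root [IsAlgClosed k] (b : ℕ → k) (hb : b 0 ≠ 0) : ∃ t : k, S t b 8 = 0 := by
  let p : Polynomial k := ∑ l ∈ Finset.range 9,
    Polynomial.C (((8).choose l : k) * b l) * Polynomial.X ^ (8 - l)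
  have hc : p.coeff 8 = b 0 := by
    simp only [p, Finset.sum_range_succ, Finset.sum_range_zero, Polynomial.coeff_add,
      Polynomial.coeff_C_mul, Polynomial.coeff_X_pow]
    simp
  have hdeg : p.degree ≠ 0 := by
    intro h
    have := Polynomial.eq_C_of_degree_eq_zero h
    rw [this, Polynomial.coeff_C] at hc
    exact hb (by simpa using hc.symm)
  obtain ⟨t, ht⟩ := IsAlgClosed.exists_root p hdeg
  refine ⟨t, ?_⟩
  simpa [p, S, Polynomial.IsRoot, Polynomial.eval_finsetSum] using ht

lemma L1 [IsAlgClosed k] (h2 : (2 : k) ≠ 0) (h3 : (3 : k) ≠ 0) (h5 : (5 : k) ≠ 0) (b : ℕ → k)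
    (g : Good b) (k0 : K b 0 = 0) (k1 : K b 1 = 0) (k2 : K b 2 = 0) : DR b := by
  by_cases k3 : K b 3 = 0
  · by_cases b0 : b 0 = 0
    · exact caseB h2 h3 h5 b g.1 k0 k1 k2 k3 b0
    have k4 : K b 4 = 0 := by
      have := g.2.2.1
      simp only [P, M, k0, k1, k2, k3] at this
      have : b 0 * (K b 4 * K b 4) = 0 := by linear_combination this
      simpa [b0] using this
    obtain ⟨t, ht⟩ := exists_root b b0
    apply DR_shear t
    apply DR_swap
    have hz : ∀ i, i ≤ 4 → S t (K b) i = 0 := by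
      intro i hi
      interval_cases i <;> simp [S0, S1, S2, S3, S4, k0, k1, k2, k3, k4]
    obtain ⟨K0, K1, K2, K3, K4⟩ := K_shear h3 t b
    obtain ⟨W0, W1, W2, W3, W4⟩ := K_swap (S t b)
    refine caseB h2 h3 h5 _ (Good_swap _ (Good_shear h3 t b g)).1 ?_ ?_ ?_ ?_ ht
    · rw [W0]; exact K4.trans (hz 4 (by norm_num))
    · rw [W1]; exact K3.trans (hz 3 (by norm_num))
    · rw [W2]; exact K2.trans (hz 2 (by norm_num))
    · rw [W3]; exact K1.trans (hz 1 (by norm_num))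
  · have h4 : (4 : k) ≠ 0 := by
      have : (4 : k) = 2 ^ 2 := by norm_num
      rw [this]; exact pow_ne_zero _ h2
    obtain ⟨t, ht⟩ : ∃ t : k, K b 4 + 4 * t * K b 3 = 0 :=
      ⟨- K b 4 / (4 * K b 3), by field_simp; ring⟩
    obtain ⟨K0, K1, K2, K3, K4⟩ := K_shear h3 t b
    have g' := Good_shear h3 t b g
    apply DR_shear t
    rw [S0, k0] at K0
    rw [S1, k0, k1] at K1
    rw [S2, k0, k1, k2] at K2
    rw [S3, k0, k1, k2] at K3
    rw [S4, k0, k1, k2, ht] at K4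
    ring_nf at K1 K2 K3 K4
    generalize S t b = d at *
    have k3' : K d 3 ≠ 0 := by rw [K3]; exact k3
    have d1 : d 1 = 0 := by
      have := g'.2.2.2.2
      simp only [P, H, M, K0, K1, K2, K4] at this
      have : 2 ^ 3 * (K d 3) ^ 3 * d 1 = 0 := by linear_combination this
      simpa [h2, k3'] using this
    have d2 : d 2 = 0 := by
      have := g'.2.2.1
      simp only [P, M, K0, K1, K2, K4] at this
      have : 2 ^ 4 * (K d 3) ^ 2 * d 2 = 0 := by linear_combination this
      simpa [h2, k3'] using this
    exact caseA h2 h3 h5 d g'.1 K0 K1 K2 k3' K4 d1 d2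

/-- conclusion once the quartic covariant is divisible by a cube -/
lemma L2 [IsAlgClosed k] (h2 : (2 : k) ≠ 0) (h3 : (3 : k) ≠ 0) (h5 : (5 : k) ≠ 0) (b : ℕ → k)
    (g : Good b) (t : k) (k2 : S t (K b) 2 = 0) (k3 : S t (K b) 3 = 0) (k4 : S t (K b) 4 = 0) :
    DR b := by
  apply DR_shear t
  apply DR_swap
  obtain ⟨K0, K1, K2, K3, K4⟩ := K_shear h3 t b
  obtain ⟨W0, W1, W2, W3, W4⟩ := K_swap (S t b)
  refine L1 h2 h3 h5 _ (Good_swap _ (Good_shear h3 t b g)) ?_ ?_ ?_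
  · rw [W0]; exact K4.trans k4
  · rw [W1]; exact K3.trans k3
  · rw [W2]; exact K2.trans k2

lemma L3 [IsAlgClosed k] (h2 : (2 : k) ≠ 0) (h3 : (3 : k) ≠ 0) (h5 : (5 : k) ≠ 0) (b : ℕ → k)
    (g : Good b) (k0 : K b 0 ≠ 0) (k1 : K b 1 = 0) : DR b := by
  have e1 := g.2.1
  have e2 := g.2.2.2.1
  have key : ∃ t : k, S t (K b) 2 = 0 ∧ S t (K b) 3 = 0 ∧ S t (K b) 4 = 0 := by
    simp only [S2, S3, S4]
    generalize K b = c at *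
    simp only [P, H, k1] at e1 e2 ⊢
    have i1 : c 0 * c 4 + 3 * c 2 ^ 2 = 0 := by
      have : 2 * (c 0 * c 4 + 3 * c 2 ^ 2) = 0 := by linear_combination e1
      simpa [h2] using this
    have i2 : c 0 * c 3 ^ 2 + 4 * c 2 ^ 3 = 0 := by
      have h : 2 * 3 * 3 * (c 0 * c 3 ^ 2 + 4 * c 2 ^ 3) = 0 := by
        field_simp at e2
        linear_combination (-1 : k) * e2 + 18 * c 2 * i1
      have := (mul_eq_zero.mp h).resolve_left (by simp [h2, h3])
      exact this
    obtain ⟨s, hs⟩ := IsAlgClosed.exists_pow_nat_eq (-(c 2 / c 0)) (n := 2) (by norm_num)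
    have hs' : c 2 = - (c 0 * s ^ 2) := by rw [hs]; field_simp
    have h4 : c 4 = -3 * c 0 * s ^ 4 := by
      refine mul_left_cancel₀ k0 ?_
      rw [hs'] at i1
      linear_combination i1
    have hq : (c 3 - 2 * c 0 * s ^ 3) * (c 3 + 2 * c 0 * s ^ 3) = 0 := by
      refine mul_left_cancel₀ k0 ?_
      rw [hs'] at i2
      linear_combination i2
    rcases mul_eq_zero.mp hq with h | h
    · have h3' : c 3 = 2 * c 0 * s ^ 3 := by linear_combination h
      refine ⟨s, ?_, ?_, ?_⟩ <;> (try rw [h4]) <;> (try rw [h3']) <;> rw [hs'] <;> ring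
    · have h3' : c 3 = -2 * c 0 * s ^ 3 := by linear_combination h
      refine ⟨-s, ?_, ?_, ?_⟩ <;> (try rw [h4]) <;> (try rw [h3']) <;> rw [hs'] <;> ring
  obtain ⟨t, a, b', c⟩ := key
  exact L2 h2 h3 h5 b g t a b' c

lemma main [IsAlgClosed k] (h2 : (2 : k) ≠ 0) (h3 : (3 : k) ≠ 0) (h5 : (5 : k) ≠ 0) (b : ℕ → k)
    (g : Good b) : DR b := by
  by_cases k0 : K b 0 = 0
  · have e1 := g.2.1
    have e2 := g.2.2.2.1
    have i1 : 4 * K b 1 * K b 3 = 3 * K b 2 ^ 2 := by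
      simp only [P, k0] at e1
      refine mul_left_cancel₀ h2 ?_
      linear_combination -e1
    have i2 : 2 * K b 1 * K b 2 * K b 3 - K b 2 ^ 3 - K b 1 ^ 2 * K b 4 = 0 := by
      simp only [P, H, k0] at e2
      field_simp at e2
      have : 2 * 3 * 3 * (2 * K b 1 * K b 2 * K b 3 - K b 2 ^ 3 - K b 1 ^ 2 * K b 4) = 0 := by
        linear_combination e2
      exact (mul_eq_zero.mp this).resolve_left (by simp [h2, h3])
    by_cases k1 : K b 1 = 0
    · have k2 : K b 2 = 0 := by
        rw [k1] at i1
        have : 3 * (K b 2 * K b 2) = 0 := by linear_combination -i1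
        simpa [h3] using this
      exact L1 h2 h3 h5 b g k0 k1 k2
    · obtain ⟨t, ht⟩ : ∃ t : k, K b 2 = -2 * t * K b 1 :=
        ⟨- K b 2 / (2 * K b 1), by field_simp⟩
      rw [ht] at i1 i2
      have k3 : K b 3 = 3 * t ^ 2 * K b 1 := by
        have : 2 * 2 * K b 1 * (K b 3 - 3 * t ^ 2 * K b 1) = 0 := by linear_combination i1
        have := (mul_eq_zero.mp this).resolve_left (by simp [h2, k1])
        linear_combination this
      have k4 : K b 4 = -4 * t ^ 3 * K b 1 := by
        rw [k3] at i2
        refine mul_left_cancel₀ (pow_ne_zero 2 k1) ?_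
        linear_combination -i2
      apply L2 h2 h3 h5 b g t
      · rw [S2, ht, k0]; ring
      · rw [S3, ht, k0, k3]; ring
      · rw [S4, ht, k0, k3, k4]; ring
  · obtain ⟨K0, K1, -⟩ := K_shear h3 (- K b 1 / K b 0) b
    apply DR_shear (- K b 1 / K b 0)
    apply L3 h2 h3 h5 _ (Good_shear h3 _ _ g)
    · rw [K0, S0]; exact k0
    · rw [K1, S1]; field_simp; ring

end Oct

/-- If all of `J_2, ..., J_7` vanish on a binary octavic `f` over an algebraically closed
field of characteristic ∉ {2,3,5,7}, then `f` has a multiple root, i.e. `f` is divisible by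
the square of a nonzero linear form. -/
theorem hasMultipleRoot_of_J_eq_zero (k : Type*) [Field k] [IsAlgClosed k] (hk : CharOK k)
    (a : Fin 9 → k)
    (h2 : J2 a = 0) (h3 : J3 a = 0) (h4 : J4 a = 0) (h5 : J5 a = 0)
    (h6 : J6 a = 0) (h7 : J7 a = 0) :
    ∃ x0 y0 : k, ¬(x0 = 0 ∧ y0 = 0) ∧
      (C y0 * X 0 - C x0 * X 1) ^ 2 ∣ octForm a := by
  have hn : ∀ p : ℕ, p.Prime → ringChar k ≠ p → (p : k) ≠ 0 := by
    intro p hp hc h0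
    have hd := ringChar.dvd h0
    rcases (Nat.dvd_prime hp).mp hd with h | h
    · exact CharP.ringChar_ne_one h
    · exact hc h
  have n2 : (2 : k) ≠ 0 := by exact_mod_cast hn 2 (by norm_num) hk.1
  have n3 : (3 : k) ≠ 0 := by exact_mod_cast hn 3 (by norm_num) hk.2.1
  have n5 : (5 : k) ≠ 0 := by exact_mod_cast hn 5 (by norm_num) hk.2.2.1
  have n7 : (7 : k) ≠ 0 := by exact_mod_cast hn 7 (by norm_num) hk.2.2.2
  obtain ⟨f8, f4⟩ := Oct.fac_ne n2 n3 n5 n7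
  obtain ⟨b, hb⟩ : ∃ b : ℕ → k, octForm a = Oct.nf 8 b := by
    refine ⟨fun i => if h : i < 9 then a ⟨i, h⟩ / ((8).choose i : k) else 0, ?_⟩
    unfold octForm Oct.nf
    rw [Finset.sum_range]
    refine Finset.sum_congr rfl fun i _ => ?_
    have hc : (((8).choose (i : ℕ) : ℕ) : k) ≠ 0 := by
      intro h0
      apply f8
      have h := Nat.choose_mul_factorial_mul_factorial (n := 8) (k := i) (by omega)
      rw [← h, Nat.cast_mul, Nat.cast_mul, h0]
      ring
    have e : (((8).choose (i : ℕ) : ℕ) : k) *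
        (if h : (i : ℕ) < 9 then a ⟨i, h⟩ / ((8).choose (i : ℕ) : k) else 0) = a i := by
      rw [dif_pos i.2]
      field_simp
    simp only [e]
  have hκ : covk a = Oct.nf 4 (Oct.K b) := by
    rw [covk, hb, Oct.cov_k n3 f8]
  have hh : covh a = Oct.nf 4 (Oct.H (Oct.K b)) := by
    rw [covh, hκ, Oct.cov_h n3 f4]
  have hm : covm a = Oct.nf 4 (Oct.M b (Oct.K b)) := by
    rw [covm, hκ, hb, Oct.cov_m f8 f4]
  have g : Oct.Good b := by
    refine ⟨?_, ?_, ?_, ?_, ?_⟩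
    · rw [J2, hb, Oct.inv_e f8] at h2
      simpa [n2, n3, n5, n7] using h2
    · rw [J4, hκ, Oct.inv_p f4] at h4
      simpa [n2, n3, n5, n7] using h4
    · rw [J5, hκ, hm, Oct.inv_p f4] at h5
      simpa [n2, n3, n5, n7] using h5
    · rw [J6, hκ, hh, Oct.inv_p f4] at h6
      simpa [n2, n3, n5, n7] using h6
    · rw [J7, hm, hh, Oct.inv_p f4] at h7
      simpa [n2, n3, n5, n7] using h7
  rw [hb]
  exact Oct.main n2 n3 n5 b g
end
end
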